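/- arXiv:2106.08509 — 3 statements merged into one kernel-verified Lean document; each statement's English description precedes it below -/
import Mathlib

section
/- There exists a constant C, independent of m, with the following property: for every integer m ≥ 1 and all axially symmetric functions u, ω, with u twice and ω once continuously differentiable on a neighborhood of the closure of D_m, satisfying ∂_r² u + (1/r) ∂_r u + ∂_{x₃}² u = −( ∂_r ω + ω/r ) in D_m, u = 0 on ∂^H D_m, and ∂_r u = 0 on ∂^V D_m, one has sup_{D_m} |u| ≤ C ( sup_{D_m} |ω| + 1 )^{3/2} ( ∫_{D_m} ( |u| + 1 )² dx )^{1/2}. -/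
noncomputable section

open Real MeasureTheory Set

/-- Inner radius of the `j`-th rectangle: `r_j = 2^(-j)`. -/
def rW (j : ℕ) : ℝ := (2 : ℝ) ^ (-(j : ℝ))

/-- Height of the `j`-th rectangle: `h_j = 2^(-β (j-1))`. -/
def hH (β : ℝ) (j : ℕ) : ℝ := (2 : ℝ) ^ (-β * ((j : ℝ) - 1))

/-- The rectangle `S_j` in the `(r, x₃)` cross-section. -/
def Srect (β : ℝ) (j : ℕ) : Set (ℝ × ℝ) :=
  {p : ℝ × ℝ | rW j ≤ p.1 ∧ p.1 < rW (j - 1) ∧ 0 < p.2 ∧ p.2 < hH β j}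

/-- The `(r, x₃)` cross-section of the domain `D_m`. -/
def Ddom (β : ℝ) (m : ℕ) : Set (ℝ × ℝ) := ⋃ j ∈ Finset.Icc 1 m, Srect β j

/-- The horizontal part `∂^H D_m` of the boundary of `D_m` (where `x₃` is locally constant). -/
def bdH (β : ℝ) (m : ℕ) : Set (ℝ × ℝ) :=
  {p : ℝ × ℝ | p.2 = 0 ∧ rW m ≤ p.1 ∧ p.1 ≤ 1} ∪
    ⋃ j ∈ Finset.Icc 1 m,
      {p : ℝ × ℝ | p.2 = hH β j ∧ rW j ≤ p.1 ∧ p.1 ≤ rW (j - 1)}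

/-- The vertical part `∂^V D_m` of the boundary of `D_m` (where `r` is locally constant). -/
def bdV (β : ℝ) (m : ℕ) : Set (ℝ × ℝ) :=
  {p : ℝ × ℝ | p.1 = 1 ∧ 0 ≤ p.2 ∧ p.2 ≤ 1} ∪
    {p : ℝ × ℝ | p.1 = rW m ∧ 0 ≤ p.2 ∧ p.2 ≤ hH β m} ∪
    ⋃ j ∈ Finset.Icc 1 (m - 1),
      {p : ℝ × ℝ | p.1 = rW j ∧ hH β (j + 1) ≤ p.2 ∧ p.2 ≤ hH β j}

/-- The full boundary `∂ D_m` of `D_m`. -/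
def bdD (β : ℝ) (m : ℕ) : Set (ℝ × ℝ) := bdH β m ∪ bdV β m

/-- The corner points of the polygonal cross-section of `D_m`
(i.e. the corner circles of the 3D domain). -/
def cornerSet (β : ℝ) (m : ℕ) : Set (ℝ × ℝ) :=
  ({(rW m, 0), ((1 : ℝ), 0), ((1 : ℝ), (1 : ℝ)), (rW m, hH β m)} : Set (ℝ × ℝ)) ∪
    ⋃ j ∈ Finset.Icc 1 (m - 1),
      ({(rW j, hH β j), (rW j, hH β (j + 1))} : Set (ℝ × ℝ))

/-- Radial partial derivative `∂_r`. -/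
def pdr (F : ℝ × ℝ → ℝ) (p : ℝ × ℝ) : ℝ := deriv (fun r => F (r, p.2)) p.1

/-- Vertical partial derivative `∂_{x₃}`. -/
def pdz (F : ℝ × ℝ → ℝ) (p : ℝ × ℝ) : ℝ := deriv (fun z => F (p.1, z)) p.2

/-- The axially symmetric Laplacian `Δ = ∂_r² + (1/r) ∂_r + ∂_{x₃}²`. -/
def cylLap (F : ℝ × ℝ → ℝ) (p : ℝ × ℝ) : ℝ :=
  pdr (pdr F) p + (1 / p.1) * pdr F p + pdz (pdz F) p

/-- The integral of an axially symmetric function over the 3-dimensional domain `D_m`,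
computed in the cross-section: `∫_{D_m} f dx = 2π ∬ F r dr dx₃`. -/
def cylIntegral (β : ℝ) (m : ℕ) (F : ℝ × ℝ → ℝ) : ℝ :=
  ∫ p in Ddom β m, F p * (2 * π * p.1)

/-- The vertical cross-section segment `D_m ∩ {r = c}` of the cross-section. -/
def vertSeg (β : ℝ) (m : ℕ) (c : ℝ) : Set ℝ := {z : ℝ | (c, z) ∈ Ddom β m}

/-! Helper material. -/

lemma hasFD {f : ℝ × ℝ → ℝ} {U : Set (ℝ × ℝ)} (hU : IsOpen U) (hf : ContDiffOn ℝ 1 f U)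
    {p : ℝ × ℝ} (hp : p ∈ U) : HasFDerivAt f (fderiv ℝ f p) p :=
  ((hf.differentiableOn (by norm_num)).differentiableAt (hU.mem_nhds hp)).hasFDerivAt

lemma hasD1 {f : ℝ × ℝ → ℝ} {U : Set (ℝ × ℝ)} (hU : IsOpen U) (hf : ContDiffOn ℝ 1 f U)
    {r z : ℝ} (hp : (r, z) ∈ U) :
    HasDerivAt (fun x => f (x, z)) (fderiv ℝ f (r, z) (1, 0)) r := by
  have h1 : HasDerivAt (fun x : ℝ => (x, z)) ((1 : ℝ), (0 : ℝ)) r :=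
    (hasDerivAt_id r).prodMk (hasDerivAt_const r z)
  exact (hasFD hU hf hp).comp_hasDerivAt r h1

lemma hasD2 {f : ℝ × ℝ → ℝ} {U : Set (ℝ × ℝ)} (hU : IsOpen U) (hf : ContDiffOn ℝ 1 f U)
    {r z : ℝ} (hp : (r, z) ∈ U) :
    HasDerivAt (fun x => f (r, x)) (fderiv ℝ f (r, z) (0, 1)) z := by
  have h1 : HasDerivAt (fun x : ℝ => (r, x)) ((0 : ℝ), (1 : ℝ)) z :=
    (hasDerivAt_const z r).prodMk (hasDerivAt_id z)
  exact (hasFD hU hf hp).comp_hasDerivAt z h1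

lemma pdr_eq {f : ℝ × ℝ → ℝ} {U : Set (ℝ × ℝ)} (hU : IsOpen U) (hf : ContDiffOn ℝ 1 f U)
    {p : ℝ × ℝ} (hp : p ∈ U) : pdr f p = fderiv ℝ f p (1, 0) :=
  (hasD1 hU hf (r := p.1) (z := p.2) hp).deriv

lemma pdz_eq {f : ℝ × ℝ → ℝ} {U : Set (ℝ × ℝ)} (hU : IsOpen U) (hf : ContDiffOn ℝ 1 f U)
    {p : ℝ × ℝ} (hp : p ∈ U) : pdz f p = fderiv ℝ f p (0, 1) :=
  (hasD2 hU hf (r := p.1) (z := p.2) hp).deriv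

lemma hasDr {f : ℝ × ℝ → ℝ} {U : Set (ℝ × ℝ)} (hU : IsOpen U) (hf : ContDiffOn ℝ 1 f U)
    {r z : ℝ} (hp : (r, z) ∈ U) :
    HasDerivAt (fun x => f (x, z)) (pdr f (r, z)) r := by
  rw [pdr_eq hU hf hp]; exact hasD1 hU hf hp

lemma hasDz {f : ℝ × ℝ → ℝ} {U : Set (ℝ × ℝ)} (hU : IsOpen U) (hf : ContDiffOn ℝ 1 f U)
    {r z : ℝ} (hp : (r, z) ∈ U) :
    HasDerivAt (fun x => f (r, x)) (pdz f (r, z)) z := by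
  rw [pdz_eq hU hf hp]; exact hasD2 hU hf hp

lemma cont_pdr {f : ℝ × ℝ → ℝ} {U : Set (ℝ × ℝ)} (hU : IsOpen U) (hf : ContDiffOn ℝ 1 f U) :
    ContinuousOn (pdr f) U := by
  have := (hf.continuousOn_fderiv_of_isOpen hU (by norm_num)).clm_apply
    (continuousOn_const (c := ((1 : ℝ), (0 : ℝ))))
  exact this.congr fun p hp => pdr_eq hU hf hp

lemma cont_pdz {f : ℝ × ℝ → ℝ} {U : Set (ℝ × ℝ)} (hU : IsOpen U) (hf : ContDiffOn ℝ 1 f U) :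
    ContinuousOn (pdz f) U := by
  have := (hf.continuousOn_fderiv_of_isOpen hU (by norm_num)).clm_apply
    (continuousOn_const (c := ((0 : ℝ), (1 : ℝ))))
  exact this.congr fun p hp => pdz_eq hU hf hp

lemma cd_pdr {f : ℝ × ℝ → ℝ} {U : Set (ℝ × ℝ)} (hU : IsOpen U) (hf : ContDiffOn ℝ 2 f U) :
    ContDiffOn ℝ 1 (pdr f) U := by
  have := (hf.fderiv_of_isOpen hU (m := 1) (by norm_num)).clm_apply
    (contDiffOn_const (c := ((1 : ℝ), (0 : ℝ))))
  exact this.congr fun p hp => pdr_eq hU (hf.of_le (by norm_num)) hp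

lemma cd_pdz {f : ℝ × ℝ → ℝ} {U : Set (ℝ × ℝ)} (hU : IsOpen U) (hf : ContDiffOn ℝ 2 f U) :
    ContDiffOn ℝ 1 (pdz f) U := by
  have := (hf.fderiv_of_isOpen hU (m := 1) (by norm_num)).clm_apply
    (contDiffOn_const (c := ((0 : ℝ), (1 : ℝ))))
  exact this.congr fun p hp => pdz_eq hU (hf.of_le (by norm_num)) hp

/-- divergence theorem on a rectangle -/
lemma div_rect {f g : ℝ × ℝ → ℝ} {U : Set (ℝ × ℝ)} (hU : IsOpen U) (hf : ContDiffOn ℝ 1 f U)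
    (hg : ContDiffOn ℝ 1 g U) {a b h : ℝ} (hab : a ≤ b) (hh : 0 ≤ h)
    (hR : Icc ((a : ℝ), (0 : ℝ)) (b, h) ⊆ U) :
    ∫ p in Icc ((a : ℝ), (0 : ℝ)) (b, h), (pdr f p + pdz g p) =
      (((∫ x in a..b, g (x, h)) - ∫ x in a..b, g (x, 0)) + ∫ y in 0..h, f (b, y)) -
        ∫ y in 0..h, f (a, y) := by
  have hsub : Ioo a b ×ˢ Ioo 0 h ⊆ U := by
    intro p hp
    apply hR
    simp only [mem_prod, mem_Ioo] at hp
    exact ⟨⟨hp.1.1.le, hp.2.1.le⟩, ⟨hp.1.2.le, hp.2.2.le⟩⟩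
  have e : ∀ p ∈ Icc ((a : ℝ), (0 : ℝ)) (b, h), pdr f p + pdz g p =
      fderiv ℝ f p (1, 0) + fderiv ℝ g p (0, 1) := fun p hp => by
    rw [pdr_eq hU hf (hR hp), pdz_eq hU hg (hR hp)]
  have key := integral_divergence_prod_Icc_of_hasFDerivAt_off_countable_of_le f g
    (fderiv ℝ f) (fderiv ℝ g) ((a : ℝ), (0 : ℝ)) (b, h) ⟨hab, hh⟩ ∅ countable_empty
    (hf.continuousOn.mono hR) (hg.continuousOn.mono hR)
    (fun x hx => hasFD hU hf (hsub hx.1)) (fun x hx => hasFD hU hg (hsub hx.1))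
    (by
      apply ContinuousOn.integrableOn_compact isCompact_Icc
      apply ContinuousOn.congr (f := fun p => pdr f p + pdz g p)
      · exact ((cont_pdr hU hf).add (cont_pdz hU hg)).mono hR
      · intro p hp; exact (e p hp).symm)
  rw [setIntegral_congr_fun measurableSet_Icc e]
  exact key

lemma hasDeriv_maxsq (x : ℝ) : HasDerivAt (fun x : ℝ => (max x 0) ^ 2) (2 * max x 0) x := by
  have hne : ∀ y : ℝ, y ≠ 0 → HasDerivAt (fun x : ℝ => (max x 0) ^ 2) (2 * max y 0) y := by
    intro y hy
    rcases lt_or_gt_of_ne hy with h | h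
    · have : HasDerivAt (fun _ : ℝ => (0 : ℝ)) 0 y := hasDerivAt_const _ _
      rw [max_eq_right h.le, mul_zero]
      apply this.congr_of_eventuallyEq
      filter_upwards [Iio_mem_nhds h] with z hz
      rw [max_eq_right (le_of_lt hz)]; norm_num
    · have : HasDerivAt (fun x : ℝ => x ^ 2) (2 * y) y := by simpa using hasDerivAt_pow 2 y
      rw [max_eq_left h.le]
      apply this.congr_of_eventuallyEq
      filter_upwards [Ioi_mem_nhds h] with z hz
      rw [max_eq_left (le_of_lt hz)]
  by_cases hx : x = 0
  · subst hx
    refine hasDerivAt_of_hasDerivAt_of_ne (g := fun y : ℝ => 2 * max y 0) (fun y hy => hne y hy) ?_ ?_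
    · exact Continuous.continuousAt (by fun_prop)
    · exact Continuous.continuousAt (by fun_prop)
  · exact hne x hx

def psi (k δ s : ℝ) : ℝ := ((max (s - k) 0) ^ 2 - (max (s - (k + 2 * δ)) 0) ^ 2) / (4 * δ)
def dpsi (k δ s : ℝ) : ℝ := (max (s - k) 0 - max (s - (k + 2 * δ)) 0) / (2 * δ)

lemma psi_deriv {k δ : ℝ} (hδ : 0 < δ) (s : ℝ) : HasDerivAt (psi k δ) (dpsi k δ s) s := by
  have h1 : ∀ c : ℝ, HasDerivAt (fun s : ℝ => (max (s - c) 0) ^ 2) (2 * max (s - c) 0) s := by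
    intro c
    exact HasDerivAt.comp_sub_const (f := fun x : ℝ => (max x 0) ^ 2) s c (hasDeriv_maxsq (s - c))
  have := ((h1 k).sub (h1 (k + 2 * δ))).div_const (4 * δ)
  refine this.congr_deriv ?_
  unfold dpsi
  field_simp
  ring

lemma dpsi_cont (k δ : ℝ) : Continuous (dpsi k δ) := by
  unfold dpsi; fun_prop

lemma dpsi_nonneg {k δ : ℝ} (hδ : 0 < δ) (s : ℝ) : 0 ≤ dpsi k δ s := by
  unfold dpsi
  apply div_nonneg _ (by positivity)
  have : max (s - (k + 2 * δ)) 0 ≤ max (s - k) 0 := max_le_max (by linarith) le_rfl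
  linarith

lemma dpsi_le_one {k δ : ℝ} (hδ : 0 < δ) (s : ℝ) : dpsi k δ s ≤ 1 := by
  unfold dpsi
  rw [div_le_one (by positivity)]
  rcases max_cases (s - k) 0 with h | h <;> rcases max_cases (s - (k + 2 * δ)) 0 with h' | h' <;>
    linarith

lemma dpsi_zero {k δ s : ℝ} (hδ : 0 < δ) (h : s ≤ k) : dpsi k δ s = 0 := by
  unfold dpsi
  rw [max_eq_right (by linarith), max_eq_right (by linarith)]; simp

lemma dpsi_one {k δ s : ℝ} (hδ : 0 < δ) (h : k + 2 * δ ≤ s) : dpsi k δ s = 1 := by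
  unfold dpsi
  rw [max_eq_left (by linarith), max_eq_left (by linarith)]; field_simp; ring

lemma psi_nonneg {k δ : ℝ} (hδ : 0 < δ) (s : ℝ) : 0 ≤ psi k δ s := by
  unfold psi
  apply div_nonneg _ (by positivity)
  have : max (s - (k + 2 * δ)) 0 ≤ max (s - k) 0 := max_le_max (by linarith) le_rfl
  have h0 : 0 ≤ max (s - (k + 2 * δ)) 0 := le_max_right _ _
  nlinarith

lemma psi_zero {k δ : ℝ} (hδ : 0 < δ) (hk : 0 ≤ k) : psi k δ 0 = 0 := by
  unfold psi
  rw [max_eq_right (by linarith), max_eq_right (by linarith)]; simp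

lemma psi_ge {k δ s : ℝ} (hδ : 0 < δ) (h : k + 2 * δ ≤ s) : δ ≤ psi k δ s := by
  unfold psi
  rw [max_eq_left (by linarith), max_eq_left (by linarith), le_div_iff₀ (by positivity)]
  nlinarith

lemma psi_cd {k δ : ℝ} (hδ : 0 < δ) : ContDiff ℝ 1 (psi k δ) := by
  rw [contDiff_one_iff_deriv]
  refine ⟨fun s => (psi_deriv hδ s).differentiableAt, ?_⟩
  have : deriv (psi k δ) = dpsi k δ := funext fun s => (psi_deriv hδ s).deriv
  rw [this]; exact dpsi_cont k δ


lemma intR {f : ℝ × ℝ → ℝ} {U : Set (ℝ × ℝ)} (hf : ContinuousOn f U) {p q : ℝ × ℝ}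
    (hR : Icc p q ⊆ U) : IntegrableOn f (Icc p q) :=
  (hf.mono hR).integrableOn_compact isCompact_Icc

lemma rect_poincare {φ : ℝ × ℝ → ℝ} {U : Set (ℝ × ℝ)} (hU : IsOpen U) (hf : ContDiffOn ℝ 1 φ U)
    {a h : ℝ} (ha : 0 < a) (hh : 0 < h) (hR : Icc ((a : ℝ), (0 : ℝ)) (2 * a, h) ⊆ U)
    (htop : ∀ r ∈ Icc a (2 * a), φ (r, h) = 0) :
    ∫ p in Icc ((a : ℝ), (0 : ℝ)) (2 * a, h), φ p ≤
      h * ∫ p in Icc ((a : ℝ), (0 : ℝ)) (2 * a, h), |pdz φ p| := by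
  have hg : ContDiffOn ℝ 1 (fun p : ℝ × ℝ => p.2 * φ p) U := contDiff_snd.contDiffOn.mul hf
  have hcz := cont_pdz hU hf
  have key := div_rect hU (f := fun _ => (0 : ℝ)) contDiffOn_const hg
    (by linarith : a ≤ 2 * a) hh.le hR
  have e : ∀ p ∈ Icc ((a : ℝ), (0 : ℝ)) (2 * a, h),
      pdr (fun _ => (0 : ℝ)) p + pdz (fun p : ℝ × ℝ => p.2 * φ p) p = φ p + p.2 * pdz φ p := by
    intro p hp
    have h1 : pdr (fun _ => (0 : ℝ)) p = 0 := by simp [pdr]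
    have h2 := ((hasDerivAt_id p.2).mul (hasDz hU hf (r := p.1) (z := p.2) (hR hp))).deriv
    have h3 : pdz (fun p : ℝ × ℝ => p.2 * φ p) p = 1 * φ p + p.2 * pdz φ p := h2
    rw [h1, h3]; ring
  rw [setIntegral_congr_fun measurableSet_Icc e] at key
  have b1 : ∫ x in a..2 * a, (fun p : ℝ × ℝ => p.2 * φ p) (x, h) = 0 := by
    rw [intervalIntegral.integral_congr (g := fun _ => (0 : ℝ))]
    · simp
    · intro x hx
      rw [uIcc_of_le (by linarith)] at hx
      simp [htop x hx]
  have b2 : ∫ x in a..2 * a, (fun p : ℝ × ℝ => p.2 * φ p) (x, 0) = 0 := by simp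
  rw [b1, b2] at key
  simp only [intervalIntegral.integral_zero, sub_zero, add_zero] at key
  rw [integral_add (g := fun p : ℝ × ℝ => p.2 * pdz φ p) (intR hf.continuousOn hR)
    (intR (continuousOn_snd.mul hcz) hR)] at key
  have : -∫ p in Icc ((a : ℝ), (0 : ℝ)) (2 * a, h), p.2 * pdz φ p ≤
      h * ∫ p in Icc ((a : ℝ), (0 : ℝ)) (2 * a, h), |pdz φ p| := by
    rw [← integral_neg, ← integral_const_mul]
    apply setIntegral_mono_on (intR (continuousOn_snd.mul hcz).neg hR)
      (intR (continuousOn_const.mul hcz.abs) hR) measurableSet_Icc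
    intro p hp
    have h0 : 0 ≤ p.2 := hp.1.2
    have h1 : p.2 ≤ h := hp.2.2
    have := neg_abs_le (pdz φ p)
    have := abs_nonneg (pdz φ p)
    show -(p.2 * pdz φ p) ≤ h * |pdz φ p|
    nlinarith
  linarith

lemma trace_aux {φ : ℝ × ℝ → ℝ} {U : Set (ℝ × ℝ)} (hU : IsOpen U) (hf : ContDiffOn ℝ 1 φ U)
    {a h c : ℝ} (ha : 0 < a) (hh : 0 < h) (hR : Icc ((a : ℝ), (0 : ℝ)) (2 * a, h) ⊆ U)
    (hc : c ∈ Icc a (2 * a)) :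
    (2 * a - c) * (∫ y in 0..h, φ (2 * a, y)) + (c - a) * (∫ y in 0..h, φ (a, y)) ≤
      (∫ p in Icc ((a : ℝ), (0 : ℝ)) (2 * a, h), φ p) +
      a * ∫ p in Icc ((a : ℝ), (0 : ℝ)) (2 * a, h), |pdr φ p| := by
  have hg : ContDiffOn ℝ 1 (fun p : ℝ × ℝ => (p.1 - c) * φ p) U :=
    (contDiff_fst.sub contDiff_const).contDiffOn.mul hf
  have hcr := cont_pdr hU hf
  have key := div_rect hU (g := fun _ => (0 : ℝ)) hg contDiffOn_const
    (by linarith : a ≤ 2 * a) hh.le hR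
  have e : ∀ p ∈ Icc ((a : ℝ), (0 : ℝ)) (2 * a, h),
      pdr (fun p : ℝ × ℝ => (p.1 - c) * φ p) p + pdz (fun _ => (0 : ℝ)) p
        = φ p + (p.1 - c) * pdr φ p := by
    intro p hp
    have h1 : pdz (fun _ => (0 : ℝ)) p = 0 := by simp [pdz]
    have h2 := (((hasDerivAt_id p.1).sub_const c).mul
      (hasDr hU hf (r := p.1) (z := p.2) (hR hp))).deriv
    have h3 : pdr (fun p : ℝ × ℝ => (p.1 - c) * φ p) p = 1 * φ p + (p.1 - c) * pdr φ p := h2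
    rw [h1, h3]; ring
  rw [setIntegral_congr_fun measurableSet_Icc e] at key
  have hc1 : ContinuousOn (fun p : ℝ × ℝ => p.1 - c) U :=
    continuousOn_fst.sub continuousOn_const
  simp only [intervalIntegral.integral_zero, sub_zero, zero_add,
    intervalIntegral.integral_const_mul] at key
  rw [integral_add (g := fun p : ℝ × ℝ => (p.1 - c) * pdr φ p) (intR hf.continuousOn hR)
    (intR (hc1.mul hcr) hR)] at key
  have : ∫ p in Icc ((a : ℝ), (0 : ℝ)) (2 * a, h), (p.1 - c) * pdr φ p ≤
      a * ∫ p in Icc ((a : ℝ), (0 : ℝ)) (2 * a, h), |pdr φ p| := by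
    rw [← integral_const_mul]
    apply setIntegral_mono_on (intR (hc1.mul hcr) hR)
      (intR (continuousOn_const.mul hcr.abs) hR) measurableSet_Icc
    intro p hp
    have h0 : a ≤ p.1 := hp.1.1
    have h1 : p.1 ≤ 2 * a := hp.2.1
    calc (p.1 - c) * pdr φ p ≤ |(p.1 - c) * pdr φ p| := le_abs_self _
      _ = |p.1 - c| * |pdr φ p| := abs_mul _ _
      _ ≤ a * |pdr φ p| := by
        apply mul_le_mul_of_nonneg_right _ (abs_nonneg _)
        rw [abs_le]; constructor <;> linarith [hc.1, hc.2]
  linarith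

/-- one-dimensional oscillation bound -/
lemma osc1 {f f' : ℝ → ℝ} {a b : ℝ} (hd : ∀ x ∈ Icc a b, HasDerivAt f (f' x) x)
    (hc : ContinuousOn f' (Icc a b)) {x y : ℝ} (hx : x ∈ Icc a b) (hy : y ∈ Icc a b) :
    f x ≤ f y + ∫ t in Icc a b, |f' t| := by
  have hsub : uIcc y x ⊆ Icc a b := by
    exact uIcc_subset_Icc hy hx
  have hii : IntervalIntegrable f' volume y x := (hc.mono hsub).intervalIntegrable
  have h1 := intervalIntegral.integral_eq_sub_of_hasDerivAt (fun t ht => hd t (hsub ht)) hii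
  have h2 : |∫ t in y..x, f' t| ≤ ∫ t in uIoc y x, |f' t| := by
    have := intervalIntegral.norm_integral_le_integral_norm_uIoc (f := f') (a := y) (b := x)
      (μ := volume)
    simpa [Real.norm_eq_abs] using this
  have h3 : ∫ t in uIoc y x, |f' t| ≤ ∫ t in Icc a b, |f' t| := by
    apply setIntegral_mono_set (hc.abs.integrableOn_compact isCompact_Icc)
    · exact Filter.Eventually.of_forall fun _ => abs_nonneg _
    · exact (uIoc_subset_uIcc.trans hsub).eventuallyLE
  have := le_abs_self (∫ t in y..x, f' t)
  linarith

lemma lady {φ : ℝ × ℝ → ℝ} {U : Set (ℝ × ℝ)} (hU : IsOpen U) (hf : ContDiffOn ℝ 1 φ U)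
    {a h : ℝ} (ha : 0 < a) (hh : 0 < h) (hR : Icc ((a : ℝ), (0 : ℝ)) (2 * a, h) ⊆ U)
    (hnn : ∀ p, 0 ≤ φ p)
    (htop : ∀ r ∈ Icc a (2 * a), φ (r, 0) = 0) :
    a * ∫ p in Icc ((a : ℝ), (0 : ℝ)) (2 * a, h), φ p ^ 2 ≤
      (∫ p in Icc ((a : ℝ), (0 : ℝ)) (2 * a, h), |pdz φ p|) *
      ((∫ p in Icc ((a : ℝ), (0 : ℝ)) (2 * a, h), φ p) +
      a * ∫ p in Icc ((a : ℝ), (0 : ℝ)) (2 * a, h), |pdr φ p|) := by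
  have hcr := cont_pdr hU hf
  have hcz := cont_pdz hU hf
  have hc := hf.continuousOn
  have hRe : Icc ((a : ℝ), (0 : ℝ)) (2 * a, h) = Icc a (2 * a) ×ˢ Icc 0 h := by
    rw [Icc_prod_eq]
  have hmem : ∀ r ∈ Icc a (2 * a), ∀ z ∈ Icc 0 h, (r, z) ∈ U := by
    intro r hr z hz
    apply hR; rw [hRe]; exact ⟨hr, hz⟩
  have i1 := intR hcz.abs hR
  have i2 := intR hcr.abs hR
  have i3 := intR hc hR
  have i4 := intR (hc.pow 2) hR
  rw [hRe] at i1 i2 i3 i4 ⊢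
  rw [Measure.volume_eq_prod] at i1 i2 i3 i4 ⊢
  -- marginals
  set f : ℝ → ℝ := fun r => ∫ z in Icc 0 h, |pdz φ (r, z)| with hfdef
  set g : ℝ → ℝ := fun z => (∫ r in Icc a (2 * a), φ (r, z)) +
    a * ∫ r in Icc a (2 * a), |pdr φ (r, z)| with hgdef
  have i1' : Integrable (fun p : ℝ × ℝ => |pdz φ p|)
    ((volume.restrict (Icc a (2 * a))).prod (volume.restrict (Icc 0 h))) := by
    rw [Measure.prod_restrict]; exact i1
  have i2' : Integrable (fun p : ℝ × ℝ => |pdr φ p|)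
    ((volume.restrict (Icc a (2 * a))).prod (volume.restrict (Icc 0 h))) := by
    rw [Measure.prod_restrict]; exact i2
  have i3' : Integrable (fun p : ℝ × ℝ => φ p)
    ((volume.restrict (Icc a (2 * a))).prod (volume.restrict (Icc 0 h))) := by
    rw [Measure.prod_restrict]; exact i3
  have hfi : IntegrableOn f (Icc a (2 * a)) := i1'.integral_prod_left
  have hgi : IntegrableOn g (Icc 0 h) :=
    (i3'.integral_prod_right).add ((i2'.integral_prod_right).const_mul a)
  have ef : ∫ p in Icc a (2 * a) ×ˢ Icc 0 h, |pdz φ p| ∂(volume.prod volume)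
      = ∫ r in Icc a (2 * a), f r := setIntegral_prod _ i1
  have eg : (∫ p in Icc a (2 * a) ×ˢ Icc 0 h, φ p ∂(volume.prod volume)) +
      a * ∫ p in Icc a (2 * a) ×ˢ Icc 0 h, |pdr φ p| ∂(volume.prod volume)
      = ∫ z in Icc 0 h, g z := by
    rw [hgdef, integral_add i3'.integral_prod_right ((i2'.integral_prod_right).const_mul a),
      integral_const_mul, ← Measure.prod_restrict, integral_prod_symm _ i3',
      integral_prod_symm _ i2']
  rw [ef, eg, ← setIntegral_prod_mul, ← integral_const_mul]
  have ifg : IntegrableOn (fun p : ℝ × ℝ => f p.1 * g p.2) (Icc a (2 * a) ×ˢ Icc 0 h)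
      (volume.prod volume) := by
    have := Integrable.mul_prod (f := f) (g := g) hfi hgi
    rw [Measure.prod_restrict] at this
    exact this
  apply setIntegral_mono_on (i4.const_mul a) ifg (measurableSet_Icc.prod measurableSet_Icc)
  rintro ⟨r, z⟩ ⟨hr, hz⟩
  simp only at hr hz ⊢
  have b1 : φ (r, z) ≤ f r := by
    have := osc1 (f := fun z => φ (r, z)) (f' := fun z => pdz φ (r, z)) (a := 0) (b := h)
      (fun x hx => hasDz hU hf (hmem r hr x hx))
      (hcz.comp (by fun_prop) (fun x hx => hmem r hr x hx)) hz
      (⟨le_rfl, hh.le⟩ : (0 : ℝ) ∈ Icc 0 h)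
    simp only [htop r hr, zero_add] at this
    exact this
  have b2 : a * φ (r, z) ≤ g z := by
    have hs : ContinuousOn (fun x => φ (x, z)) (Icc a (2 * a)) :=
      hc.comp (by fun_prop) (fun x hx => hmem x hx z hz)
    have hpt : ∀ y ∈ Icc a (2 * a), φ (r, z) ≤
        φ (y, z) + ∫ t in Icc a (2 * a), |pdr φ (t, z)| := by
      intro y hy
      exact osc1 (f := fun x => φ (x, z)) (f' := fun x => pdr φ (x, z)) (a := a) (b := 2 * a)
        (fun x hx => hasDr hU hf (hmem x hx z hz))
        (hcr.comp (by fun_prop) (fun x hx => hmem x hx z hz)) hr hy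
    have h1 : ∫ y in Icc a (2 * a), φ (r, z) ≤
        ∫ y in Icc a (2 * a), (φ (y, z) + ∫ t in Icc a (2 * a), |pdr φ (t, z)|) := by
      apply setIntegral_mono_on _ _ measurableSet_Icc hpt
      · exact continuousOn_const.integrableOn_compact isCompact_Icc
      · exact (hs.add continuousOn_const).integrableOn_compact isCompact_Icc
    rw [integral_add (hs.integrableOn_compact isCompact_Icc)
      (continuousOn_const.integrableOn_compact isCompact_Icc), setIntegral_const,
      setIntegral_const] at h1
    have hv : volume.real (Icc a (2 * a)) = a := by
      rw [Real.volume_real_Icc_of_le (by linarith)]; ring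
    rw [hv] at h1
    simpa [hgdef] using h1
  have := hnn (r, z)
  calc a * φ (r, z) ^ 2 = φ (r, z) * (a * φ (r, z)) := by ring
    _ ≤ f r * g z := mul_le_mul b1 b2 (by positivity) (this.trans b1)


def XX (u : ℝ × ℝ → ℝ) (k δ a h : ℝ) : ℝ :=
  ∫ p in Icc ((a : ℝ), (0 : ℝ)) (2 * a, h), p.1 * (dpsi k δ (u p) * (|pdr u p| + |pdz u p|))
def YY (u : ℝ × ℝ → ℝ) (k δ a h : ℝ) : ℝ :=
  ∫ p in Icc ((a : ℝ), (0 : ℝ)) (2 * a, h), p.1 * (dpsi k δ (u p) * (pdr u p ^ 2 + pdz u p ^ 2))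
def NN (u : ℝ × ℝ → ℝ) (k δ a h : ℝ) : ℝ :=
  ∫ p in Icc ((a : ℝ), (0 : ℝ)) (2 * a, h), p.1 * dpsi k δ (u p)
def FF (u ω : ℝ × ℝ → ℝ) (k δ : ℝ) (p : ℝ × ℝ) : ℝ :=
  p.1 * (pdr u p + ω p) * psi k δ (u p)

section rect
variable {u ω : ℝ × ℝ → ℝ} {U : Set (ℝ × ℝ)} {k δ a h L : ℝ}

lemma phi_cd (hu : ContDiffOn ℝ 2 u U) (hδ : 0 < δ) :
    ContDiffOn ℝ 1 (fun p => psi k δ (u p)) U :=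
  (psi_cd hδ).comp_contDiffOn (hu.of_le (by norm_num))

lemma phi_pdr (hU : IsOpen U) (hu : ContDiffOn ℝ 2 u U) (hδ : 0 < δ) {p : ℝ × ℝ} (hp : p ∈ U) :
    pdr (fun p => psi k δ (u p)) p = dpsi k δ (u p) * pdr u p := by
  have h1 := hasDr hU (hu.of_le (by norm_num) : ContDiffOn ℝ 1 u U) (r := p.1) (z := p.2) hp
  exact (HasDerivAt.comp p.1 (h₂ := psi k δ) (psi_deriv hδ _) h1).deriv

lemma phi_pdz (hU : IsOpen U) (hu : ContDiffOn ℝ 2 u U) (hδ : 0 < δ) {p : ℝ × ℝ} (hp : p ∈ U) :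
    pdz (fun p => psi k δ (u p)) p = dpsi k δ (u p) * pdz u p := by
  have h1 := hasDz hU (hu.of_le (by norm_num) : ContDiffOn ℝ 1 u U) (r := p.1) (z := p.2) hp
  exact (HasDerivAt.comp p.2 (h₂ := psi k δ) (psi_deriv hδ _) h1).deriv

lemma cX (hU : IsOpen U) (hu : ContDiffOn ℝ 2 u U) : ContinuousOn
    (fun p : ℝ × ℝ => p.1 * (dpsi k δ (u p) * (|pdr u p| + |pdz u p|))) U := by
  have h1 := cont_pdr hU (hu.of_le (by norm_num) : ContDiffOn ℝ 1 u U)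
  have h2 := cont_pdz hU (hu.of_le (by norm_num) : ContDiffOn ℝ 1 u U)
  have h3 := (dpsi_cont k δ).comp_continuousOn hu.continuousOn
  exact continuousOn_fst.mul (h3.mul (h1.abs.add h2.abs))

lemma cY (hU : IsOpen U) (hu : ContDiffOn ℝ 2 u U) : ContinuousOn
    (fun p : ℝ × ℝ => p.1 * (dpsi k δ (u p) * (pdr u p ^ 2 + pdz u p ^ 2))) U := by
  have h1 := cont_pdr hU (hu.of_le (by norm_num) : ContDiffOn ℝ 1 u U)
  have h2 := cont_pdz hU (hu.of_le (by norm_num) : ContDiffOn ℝ 1 u U)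
  have h3 := (dpsi_cont k δ).comp_continuousOn hu.continuousOn
  exact continuousOn_fst.mul (h3.mul ((h1.pow 2).add (h2.pow 2)))

lemma cN (hu : ContinuousOn u U) : ContinuousOn
    (fun p : ℝ × ℝ => p.1 * (dpsi k δ (u p))) U := by
  have h3 := (dpsi_cont k δ).comp_continuousOn hu
  exact continuousOn_fst.mul h3

lemma XX_nonneg (hδ : 0 < δ) (ha : 0 < a) : 0 ≤ XX u k δ a h := by
  apply setIntegral_nonneg measurableSet_Icc
  intro p hp
  have h0 : 0 ≤ p.1 := ha.le.trans hp.1.1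
  have := dpsi_nonneg (k := k) hδ (u p)
  positivity

lemma NN_nonneg (hδ : 0 < δ) (ha : 0 < a) : 0 ≤ NN u k δ a h := by
  apply setIntegral_nonneg measurableSet_Icc
  intro p hp
  have h0 : 0 ≤ p.1 := ha.le.trans hp.1.1
  have := dpsi_nonneg (k := k) hδ (u p)
  positivity

/-- Gradient integrals against `XX`. -/
lemma grad_le (hU : IsOpen U) (hu : ContDiffOn ℝ 2 u U) (hδ : 0 < δ) (ha : 0 < a)
    (hR : Icc ((a : ℝ), (0 : ℝ)) (2 * a, h) ⊆ U) :
    a * (∫ p in Icc ((a : ℝ), (0 : ℝ)) (2 * a, h), |pdr (fun p => psi k δ (u p)) p|) +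
    a * (∫ p in Icc ((a : ℝ), (0 : ℝ)) (2 * a, h), |pdz (fun p => psi k δ (u p)) p|)
      ≤ XX u k δ a h := by
  have hφ := phi_cd (k := k) hu hδ
  have h1 := (cont_pdr hU hφ).abs
  have h2 := (cont_pdz hU hφ).abs
  rw [← mul_add, ← integral_add (intR h1 hR) (intR h2 hR), ← integral_const_mul]
  apply setIntegral_mono_on (intR (continuousOn_const.mul (h1.add h2)) hR) (intR (cX hU hu) hR)
    measurableSet_Icc
  intro p hp
  have h0 : a ≤ p.1 := hp.1.1
  have hd := dpsi_nonneg (k := k) hδ (u p)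
  simp only [Pi.mul_apply, Pi.add_apply]
  rw [phi_pdr hU hu hδ (hR hp), phi_pdz hU hu hδ (hR hp), abs_mul, abs_mul, abs_of_nonneg hd,
    ← mul_add]
  exact mul_le_mul_of_nonneg_right h0 (by positivity)

lemma abs_int_nonneg (f : ℝ × ℝ → ℝ) (s : Set (ℝ × ℝ)) : 0 ≤ ∫ p in s, |f p| :=
  integral_nonneg fun _ => abs_nonneg _

lemma phi_le (hU : IsOpen U) (hu : ContDiffOn ℝ 2 u U) (hk : 0 ≤ k) (hδ : 0 < δ) (ha : 0 < a)
    (hh : 0 < h) (hha : h ≤ 2 * a)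
    (hR : Icc ((a : ℝ), (0 : ℝ)) (2 * a, h) ⊆ U)
    (ht : ∀ r ∈ Icc a (2 * a), u (r, h) = 0) :
    (∫ p in Icc ((a : ℝ), (0 : ℝ)) (2 * a, h), psi k δ (u p)) +
      a * (∫ p in Icc ((a : ℝ), (0 : ℝ)) (2 * a, h), |pdr (fun p => psi k δ (u p)) p|)
      ≤ 2 * XX u k δ a h := by
  have h1 := grad_le (k := k) hU hu hδ ha hR
  have h2 := rect_poincare hU (phi_cd (k := k) hu hδ) ha hh hR
    (fun r hr => by rw [ht r hr, psi_zero hδ hk])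
  have h3 := abs_int_nonneg (pdz (fun p => psi k δ (u p))) (Icc ((a : ℝ), (0 : ℝ)) (2 * a, h))
  have h4 := abs_int_nonneg (pdr (fun p => psi k δ (u p))) (Icc ((a : ℝ), (0 : ℝ)) (2 * a, h))
  have h5 := mul_le_mul_of_nonneg_right hha h3
  have h6 := mul_nonneg ha.le h4
  linarith

lemma tr_left (hU : IsOpen U) (hu : ContDiffOn ℝ 2 u U) (hk : 0 ≤ k) (hδ : 0 < δ) (ha : 0 < a)
    (hh : 0 < h) (hha : h ≤ 2 * a)
    (hR : Icc ((a : ℝ), (0 : ℝ)) (2 * a, h) ⊆ U)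
    (ht : ∀ r ∈ Icc a (2 * a), u (r, h) = 0) :
    a * (∫ y in 0..h, psi k δ (u (a, y))) ≤ 2 * XX u k δ a h := by
  have h1 := phi_le hU hu hk hδ ha hh hha hR ht
  have h2 := trace_aux hU (phi_cd (k := k) hu hδ) ha hh hR (c := 2 * a) ⟨by linarith, le_rfl⟩
  linarith

lemma tr_right (hU : IsOpen U) (hu : ContDiffOn ℝ 2 u U) (hk : 0 ≤ k) (hδ : 0 < δ) (ha : 0 < a)
    (hh : 0 < h) (hha : h ≤ 2 * a)
    (hR : Icc ((a : ℝ), (0 : ℝ)) (2 * a, h) ⊆ U)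
    (ht : ∀ r ∈ Icc a (2 * a), u (r, h) = 0) :
    a * (∫ y in 0..h, psi k δ (u (2 * a, y))) ≤ 2 * XX u k δ a h := by
  have h1 := phi_le hU hu hk hδ ha hh hha hR ht
  have h2 := trace_aux hU (phi_cd (k := k) hu hδ) ha hh hR (c := a) ⟨le_rfl, by linarith⟩
  linarith

lemma NN_le (hU : IsOpen U) (hu : ContDiffOn ℝ 2 u U) (hk : 0 ≤ k) (hδ : 0 < δ) (ha : 0 < a)
    (hh : 0 < h) (hha : h ≤ 2 * a)
    (hR : Icc ((a : ℝ), (0 : ℝ)) (2 * a, h) ⊆ U)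
    (ht : ∀ r ∈ Icc a (2 * a), u (r, h) = 0) (hb : ∀ r ∈ Icc a (2 * a), u (r, 0) = 0)
    {k' δ' : ℝ} (hδ' : 0 < δ') (hk' : k + 2 * δ ≤ k') :
    NN u k' δ' a h ^ 2 * δ ^ 3 ≤ 24 * XX u k δ a h ^ 3 := by
  have h1 := phi_le hU hu hk hδ ha hh hha hR ht
  have h2 := lady hU (phi_cd (k := k) hu hδ) ha hh hR (fun p => psi_nonneg hδ _)
    (fun r hr => by rw [hb r hr, psi_zero hδ hk])
  have h3 := grad_le (k := k) hU hu hδ ha hR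
  have h4 := abs_int_nonneg (pdz (fun p => psi k δ (u p))) (Icc ((a : ℝ), (0 : ℝ)) (2 * a, h))
  have h5 := abs_int_nonneg (pdr (fun p => psi k δ (u p))) (Icc ((a : ℝ), (0 : ℝ)) (2 * a, h))
  have hcφ := (phi_cd (k := k) hu hδ).continuousOn
  have hX := XX_nonneg (u := u) (k := k) (h := h) hδ ha
  have hN := NN_nonneg (u := u) (k := k') (h := h) hδ' ha
  have hpt : ∀ p : ℝ × ℝ, δ * dpsi k' δ' (u p) ≤ psi k δ (u p) ∧
      δ ^ 2 * dpsi k' δ' (u p) ≤ psi k δ (u p) ^ 2 := by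
    intro p
    rcases le_or_gt (u p) k' with hle | hgt
    · rw [dpsi_zero hδ' hle]
      have := psi_nonneg (k := k) hδ (u p)
      constructor
      · simpa using this
      · rw [mul_zero]; positivity
    · have e1 := psi_ge (k := k) (s := u p) hδ (by linarith)
      have e2 := dpsi_le_one (k := k') hδ' (u p)
      have e3 := dpsi_nonneg (k := k') hδ' (u p)
      constructor <;> nlinarith
  have n1 : δ * NN u k' δ' a h ≤
      2 * a * ∫ p in Icc ((a : ℝ), (0 : ℝ)) (2 * a, h), psi k δ (u p) := by
    unfold NN
    rw [← integral_const_mul, ← integral_const_mul]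
    apply setIntegral_mono_on (intR (continuousOn_const.mul (cN hu.continuousOn)) hR)
      (intR (continuousOn_const.mul hcφ) hR) measurableSet_Icc
    intro p hp
    have e1 : a ≤ p.1 := hp.1.1
    have e2 : p.1 ≤ 2 * a := hp.2.1
    have e3 := psi_nonneg (k := k) hδ (u p)
    calc δ * (p.1 * dpsi k' δ' (u p)) = p.1 * (δ * dpsi k' δ' (u p)) := by ring
      _ ≤ p.1 * psi k δ (u p) := mul_le_mul_of_nonneg_left (hpt p).1 (by linarith)
      _ ≤ _ := mul_le_mul_of_nonneg_right e2 e3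
  have n2 : δ ^ 2 * NN u k' δ' a h ≤
      2 * a * ∫ p in Icc ((a : ℝ), (0 : ℝ)) (2 * a, h), psi k δ (u p) ^ 2 := by
    unfold NN
    rw [← integral_const_mul, ← integral_const_mul]
    apply setIntegral_mono_on (intR (continuousOn_const.mul (cN hu.continuousOn)) hR)
      (intR (continuousOn_const.mul (hcφ.pow 2)) hR) measurableSet_Icc
    intro p hp
    have e1 : a ≤ p.1 := hp.1.1
    have e2 : p.1 ≤ 2 * a := hp.2.1
    calc δ ^ 2 * (p.1 * dpsi k' δ' (u p)) = p.1 * (δ ^ 2 * dpsi k' δ' (u p)) := by ring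
      _ ≤ p.1 * psi k δ (u p) ^ 2 := mul_le_mul_of_nonneg_left (hpt p).2 (by linarith)
      _ ≤ _ := mul_le_mul_of_nonneg_right e2 (by positivity)
  generalize XX u k δ a h = X at *
  generalize NN u k' δ' a h = N at *
  generalize (∫ p in Icc ((a : ℝ), (0 : ℝ)) (2 * a, h), |pdz (fun p => psi k δ (u p)) p|) = Q at *
  generalize (∫ p in Icc ((a : ℝ), (0 : ℝ)) (2 * a, h), |pdr (fun p => psi k δ (u p)) p|) = P at *
  generalize (∫ p in Icc ((a : ℝ), (0 : ℝ)) (2 * a, h), psi k δ (u p)) = S at *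
  generalize (∫ p in Icc ((a : ℝ), (0 : ℝ)) (2 * a, h), psi k δ (u p) ^ 2) = T at *
  have hP : 0 ≤ a * P := by positivity
  have m1 : δ * N ≤ 2 * a * (2 * X) := n1.trans
    (mul_le_mul_of_nonneg_left (by linarith) (by positivity))
  have m2 : a * (δ ^ 2 * N) ≤ 4 * X ^ 2 := by
    have : a * T ≤ Q * (2 * X) := h2.trans (mul_le_mul_of_nonneg_left h1 h4)
    have aQ : a * Q ≤ X := by linarith
    have := mul_le_mul_of_nonneg_right aQ hX
    nlinarith
  have m3 := mul_le_mul m1 m2 (by positivity) (by positivity)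
  have m4 : a * (N ^ 2 * δ ^ 3) ≤ a * (24 * X ^ 3) := by
    have : 0 ≤ a * X ^ 3 := by positivity
    nlinarith
  exact le_of_mul_le_mul_left m4 ha

lemma green (hU : IsOpen U) (hu : ContDiffOn ℝ 2 u U) (hω : ContDiffOn ℝ 1 ω U)
    (hk : 0 ≤ k) (hδ : 0 < δ) (ha : 0 < a) (hh : 0 < h)
    (hR : Icc ((a : ℝ), (0 : ℝ)) (2 * a, h) ⊆ U)
    (ht : ∀ r ∈ Icc a (2 * a), u (r, h) = 0) (hb : ∀ r ∈ Icc a (2 * a), u (r, 0) = 0)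
    (hpde : ∀ p ∈ Icc ((a : ℝ), (0 : ℝ)) (2 * a, h), cylLap u p = -(pdr ω p + ω p / p.1))
    (hL : ∀ p ∈ Icc ((a : ℝ), (0 : ℝ)) (2 * a, h), |ω p| ≤ L) :
    YY u k δ a h ≤ (∫ y in 0..h, FF u ω k δ (2 * a, y)) - (∫ y in 0..h, FF u ω k δ (a, y))
      + L * XX u k δ a h := by
  have hu1 : ContDiffOn ℝ 1 u U := hu.of_le (by norm_num)
  have hφ := phi_cd (k := k) hu hδ
  have hur := cd_pdr hU hu
  have huz := cd_pdz hU hu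
  have hF : ContDiffOn ℝ 1 (FF u ω k δ) U :=
    (contDiff_fst.contDiffOn.mul (hur.add hω)).mul hφ
  have hG : ContDiffOn ℝ 1 (fun p : ℝ × ℝ => p.1 * pdz u p * psi k δ (u p)) U :=
    (contDiff_fst.contDiffOn.mul huz).mul hφ
  have key := div_rect hU hF hG (by linarith : a ≤ 2 * a) hh.le hR
  have e : ∀ p ∈ Icc ((a : ℝ), (0 : ℝ)) (2 * a, h),
      pdr (FF u ω k δ) p + pdz (fun p : ℝ × ℝ => p.1 * pdz u p * psi k δ (u p)) p =
      p.1 * (dpsi k δ (u p) * (pdr u p ^ 2 + pdz u p ^ 2)) +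
      p.1 * (dpsi k δ (u p) * (ω p * pdr u p)) := by
    intro p hp
    have hpU := hR hp
    have hp1 : 0 < p.1 := ha.trans_le hp.1.1
    have d1 := hasDr hU hur (r := p.1) (z := p.2) hpU
    have d2 := hasDr hU hω (r := p.1) (z := p.2) hpU
    have d3 := hasDr hU hφ (r := p.1) (z := p.2) hpU
    have d4 := hasDz hU huz (r := p.1) (z := p.2) hpU
    have d5 := hasDz hU hφ (r := p.1) (z := p.2) hpU
    have q1 : pdr (FF u ω k δ) p = _ := (((hasDerivAt_id p.1).mul (d1.add d2)).mul d3).deriv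
    have q2 : pdz (fun p : ℝ × ℝ => p.1 * pdz u p * psi k δ (u p)) p = _ :=
      ((d4.const_mul p.1).mul d5).deriv
    rw [q1, q2]
    have g1 := phi_pdr (k := k) hU hu hδ hpU
    have g2 := phi_pdz (k := k) hU hu hδ hpU
    have hp' := hpde p hp
    unfold cylLap at hp'
    simp only [Prod.mk.eta, id, Pi.mul_apply, Pi.add_apply] at g1 g2 ⊢
    rw [g1, g2]
    have : p.1 * pdr (pdr u) p + pdr u p + p.1 * pdz (pdz u) p + p.1 * pdr ω p + ω p = 0 := by
      field_simp at hp'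
      linarith
    linear_combination psi k δ (u p) * this
  rw [setIntegral_congr_fun measurableSet_Icc e] at key
  have b1 : ∫ x in a..2 * a, (fun p : ℝ × ℝ => p.1 * pdz u p * psi k δ (u p)) (x, h) = 0 := by
    rw [intervalIntegral.integral_congr (g := fun _ => (0 : ℝ))]
    · simp
    · intro x hx
      rw [uIcc_of_le (by linarith)] at hx
      simp [ht x hx, psi_zero hδ hk]
  have b2 : ∫ x in a..2 * a, (fun p : ℝ × ℝ => p.1 * pdz u p * psi k δ (u p)) (x, 0) = 0 := by
    rw [intervalIntegral.integral_congr (g := fun _ => (0 : ℝ))]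
    · simp
    · intro x hx
      rw [uIcc_of_le (by linarith)] at hx
      simp [hb x hx, psi_zero hδ hk]
  have cW : ContinuousOn (fun p : ℝ × ℝ => p.1 * (dpsi k δ (u p) * (ω p * pdr u p))) U :=
    continuousOn_fst.mul (((dpsi_cont k δ).comp_continuousOn hu.continuousOn).mul
      (hω.continuousOn.mul hur.continuousOn))
  rw [b1, b2, integral_add (intR (cY hU hu) hR) (intR cW hR)] at key
  have hW : -∫ p in Icc ((a : ℝ), (0 : ℝ)) (2 * a, h), p.1 * (dpsi k δ (u p) * (ω p * pdr u p))
      ≤ L * XX u k δ a h := by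
    unfold XX
    rw [← integral_neg, ← integral_const_mul]
    apply setIntegral_mono_on (intR cW.neg hR) (intR (continuousOn_const.mul (cX hU hu)) hR)
      measurableSet_Icc
    intro p hp
    have hp1 : 0 < p.1 := ha.trans_le hp.1.1
    have hd := dpsi_nonneg (k := k) hδ (u p)
    have : -(ω p * pdr u p) ≤ L * (|pdr u p| + |pdz u p|) := by
      calc -(ω p * pdr u p) ≤ |ω p * pdr u p| := neg_le_abs _
        _ = |ω p| * |pdr u p| := abs_mul _ _
        _ ≤ L * |pdr u p| := mul_le_mul_of_nonneg_right (hL p hp) (abs_nonneg _)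
        _ ≤ _ := by
          have : 0 ≤ L := (abs_nonneg _).trans (hL p hp)
          have := mul_nonneg this (abs_nonneg (pdz u p))
          linarith
    calc -(p.1 * (dpsi k δ (u p) * (ω p * pdr u p)))
        = (p.1 * dpsi k δ (u p)) * (-(ω p * pdr u p)) := by ring
      _ ≤ (p.1 * dpsi k δ (u p)) * (L * (|pdr u p| + |pdz u p|)) :=
        mul_le_mul_of_nonneg_left this (by positivity)
      _ = L * (p.1 * (dpsi k δ (u p) * (|pdr u p| + |pdz u p|))) := by ring
  unfold YY
  linarith

lemma XX_le (hU : IsOpen U) (hu : ContDiffOn ℝ 2 u U) (hδ : 0 < δ) (ha : 0 < a)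
    (hR : Icc ((a : ℝ), (0 : ℝ)) (2 * a, h) ⊆ U) {t : ℝ} (htp : 0 < t) :
    XX u k δ a h ≤ t * YY u k δ a h + 1 / (2 * t) * NN u k δ a h := by
  unfold XX YY NN
  rw [← integral_const_mul, ← integral_const_mul, ← integral_add
    ((intR (cY hU hu) hR).const_mul t) ((intR (cN hu.continuousOn) hR).const_mul _)]
  apply setIntegral_mono_on (intR (cX hU hu) hR)
    (((intR (cY hU hu) hR).const_mul t).add ((intR (cN hu.continuousOn) hR).const_mul _))
    measurableSet_Icc
  intro p hp
  have hp1 : 0 < p.1 := ha.trans_le hp.1.1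
  have hd := dpsi_nonneg (k := k) hδ (u p)
  have hx : ∀ x : ℝ, |x| ≤ t * x ^ 2 + 1 / (4 * t) := by
    intro x
    rw [← sq_abs]
    have : t * |x| ^ 2 + 1 / (4 * t) - |x| = t * (|x| - 1 / (2 * t)) ^ 2 := by
      field_simp; ring
    have h2 : 0 ≤ t * (|x| - 1 / (2 * t)) ^ 2 := by positivity
    linarith
  have h1 := hx (pdr u p)
  have h2 := hx (pdz u p)
  have h3 : 1 / (2 * t) = 1 / (4 * t) + 1 / (4 * t) := by field_simp; ring
  calc p.1 * (dpsi k δ (u p) * (|pdr u p| + |pdz u p|))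
      ≤ p.1 * (dpsi k δ (u p) * (t * (pdr u p ^ 2 + pdz u p ^ 2) + 1 / (2 * t))) := by
        apply mul_le_mul_of_nonneg_left _ hp1.le
        apply mul_le_mul_of_nonneg_left _ hd
        rw [h3]; linarith
    _ = t * (p.1 * (dpsi k δ (u p) * (pdr u p ^ 2 + pdz u p ^ 2))) +
        1 / (2 * t) * (p.1 * dpsi k δ (u p)) := by ring

end rect


lemma rW_pos (i : ℕ) : 0 < rW i := by unfold rW; positivity

lemma rW_zero : rW 0 = 1 := by simp [rW]

lemma rW_two (i : ℕ) : 2 * rW (i + 1) = rW i := by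
  unfold rW
  have : -(i : ℝ) = -((i + 1 : ℕ) : ℝ) + 1 := by push_cast; ring
  rw [this, Real.rpow_add (by norm_num), Real.rpow_one]; ring

lemma rW_le_one (i : ℕ) : rW i ≤ 1 := by
  unfold rW
  apply Real.rpow_le_one_of_one_le_of_nonpos (by norm_num)
  simp

lemma hH_pos (β : ℝ) (i : ℕ) : 0 < hH β i := by unfold hH; positivity

lemma hH_one (β : ℝ) : hH β 1 = 1 := by simp [hH]

lemma hH_le {β : ℝ} (hβ : 1 < β) (i : ℕ) : hH β (i + 1) ≤ 2 * rW (i + 1) := by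
  rw [rW_two]; unfold hH rW
  apply Real.rpow_le_rpow_of_exponent_le (by norm_num)
  push_cast
  have : (0 : ℝ) ≤ i := by positivity
  nlinarith

lemma hH_anti {β : ℝ} (hβ : 1 < β) (i : ℕ) : hH β (i + 2) ≤ hH β (i + 1) := by
  unfold hH
  apply Real.rpow_le_rpow_of_exponent_le (by norm_num)
  push_cast
  nlinarith

lemma hH_le_one {β : ℝ} (hβ : 1 < β) (i : ℕ) : hH β (i + 1) ≤ 1 := by
  have := hH_le hβ i
  rw [rW_two] at this
  exact this.trans (rW_le_one i)

lemma srect_sub {β : ℝ} {m i : ℕ} (hi : i < m) : Srect β (i + 1) ⊆ Ddom β m := by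
  unfold Ddom
  apply Set.subset_biUnion_of_mem (u := fun j => Srect β j)
  simp; omega

lemma ioo_sub {β : ℝ} (i : ℕ) :
    Ioo (rW (i + 1)) (2 * rW (i + 1)) ×ˢ Ioo 0 (hH β (i + 1)) ⊆ Srect β (i + 1) := by
  rintro ⟨r, z⟩ ⟨h1, h2⟩
  simp only [mem_Ioo] at h1 h2
  refine ⟨h1.1.le, ?_, h2.1, h2.2⟩
  have : i + 1 - 1 = i := rfl
  rw [this, ← rW_two]; exact h1.2

lemma closure_ioo {a h : ℝ} (ha : 0 < a) (hh : 0 < h) :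
    closure (Ioo a (2 * a) ×ˢ Ioo 0 h) = Icc ((a : ℝ), (0 : ℝ)) (2 * a, h) := by
  rw [closure_prod_eq, closure_Ioo (by linarith), closure_Ioo hh.ne, Icc_prod_eq]

lemma rect_sub {β : ℝ} {m i : ℕ} (hi : i < m) :
    Icc ((rW (i + 1) : ℝ), (0 : ℝ)) (2 * rW (i + 1), hH β (i + 1)) ⊆ closure (Ddom β m) := by
  rw [← closure_ioo (rW_pos _) (hH_pos _ _)]
  exact closure_mono ((ioo_sub i).trans (srect_sub hi))

lemma srect_sub_rect {β : ℝ} (i : ℕ) : Srect β (i + 1) ⊆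
    Icc ((rW (i + 1) : ℝ), (0 : ℝ)) (2 * rW (i + 1), hH β (i + 1)) := by
  rintro ⟨r, z⟩ ⟨h1, h2, h3, h4⟩
  have e : i + 1 - 1 = i := rfl
  rw [e, ← rW_two] at h2
  exact ⟨⟨h1, h3.le⟩, ⟨h2.le, h4.le⟩⟩

lemma sum_pow {m : ℕ} {n x : ℕ → ℝ} {c : ℝ} (hc : 0 ≤ c)
    (hx : ∀ i < m, 0 ≤ x i) (h : ∀ i < m, n i ^ 2 ≤ c * x i ^ 3) (hn : ∀ i < m, 0 ≤ n i) :
    (∑ i ∈ Finset.range m, n i) ^ 2 ≤ c * (∑ i ∈ Finset.range m, x i) ^ 3 := by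
  set X := ∑ i ∈ Finset.range m, x i with hX
  have hXn : 0 ≤ X := Finset.sum_nonneg fun i hi => hx i (Finset.mem_range.1 hi)
  have h1 : ∀ i ∈ Finset.range m, n i ≤ √(c * X) * x i := by
    intro i hi
    have hi' := Finset.mem_range.1 hi
    have hle : x i ≤ X := Finset.single_le_sum (f := x)
      (fun j hj => hx j (Finset.mem_range.1 hj)) hi
    apply le_of_sq_le_sq _ (mul_nonneg (Real.sqrt_nonneg _) (hx i hi'))
    rw [mul_pow, Real.sq_sqrt (by positivity)]
    refine (h i hi').trans ?_
    have : 0 ≤ c * x i ^ 2 := by positivity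
    nlinarith [mul_le_mul_of_nonneg_left hle this]
  have h2 : ∑ i ∈ Finset.range m, n i ≤ √(c * X) * X := by
    rw [hX, Finset.mul_sum]; exact Finset.sum_le_sum h1
  have h3 : 0 ≤ ∑ i ∈ Finset.range m, n i :=
    Finset.sum_nonneg fun i hi => hn i (Finset.mem_range.1 hi)
  calc (∑ i ∈ Finset.range m, n i) ^ 2 ≤ (√(c * X) * X) ^ 2 := pow_le_pow_left₀ h3 h2 2
    _ = c * X ^ 3 := by rw [mul_pow, Real.sq_sqrt (by positivity)]; ring

section glob
variable {u ω : ℝ × ℝ → ℝ} {U : Set (ℝ × ℝ)} {β L k δ : ℝ} {m : ℕ}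

lemma pde_closed (hU : IsOpen U) (hsub : closure (Ddom β m) ⊆ U)
    (hu : ContDiffOn ℝ 2 u U) (hω : ContDiffOn ℝ 1 ω U)
    (hpde : ∀ p ∈ Ddom β m, cylLap u p = -(pdr ω p + ω p / p.1)) {i : ℕ} (hi : i < m) :
    ∀ p ∈ Icc ((rW (i + 1) : ℝ), (0 : ℝ)) (2 * rW (i + 1), hH β (i + 1)),
      cylLap u p = -(pdr ω p + ω p / p.1) := by
  have hR := (rect_sub (β := β) hi).trans hsub
  have hcl := closure_ioo (rW_pos (i + 1)) (hH_pos β (i + 1))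
  have c1 : ContinuousOn (fun p : ℝ × ℝ => p.1)
    (Icc ((rW (i + 1) : ℝ), (0 : ℝ)) (2 * rW (i + 1), hH β (i + 1))) := continuousOn_fst
  have hne : ∀ p ∈ Icc ((rW (i + 1) : ℝ), (0 : ℝ)) (2 * rW (i + 1), hH β (i + 1)), p.1 ≠ 0 :=
    fun p hp => ((rW_pos (i + 1)).trans_le hp.1.1).ne'
  have hu1 : ContDiffOn ℝ 1 u U := hu.of_le (by norm_num)
  refine Set.EqOn.of_subset_closure (s := Ioo (rW (i + 1)) (2 * rW (i + 1)) ×ˢ Ioo 0 (hH β (i + 1)))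
    (f := cylLap u) (g := fun p => -(pdr ω p + ω p / p.1)) ?_ ?_ ?_ ?_ ?_
  · exact fun p hp => hpde p (srect_sub hi (ioo_sub i hp))
  · unfold cylLap
    exact (((cont_pdr hU (cd_pdr hU hu)).mono hR).add ((continuousOn_const.div c1 hne).mul
      ((cont_pdr hU hu1).mono hR))).add ((cont_pdz hU (cd_pdz hU hu)).mono hR)
  · exact (((cont_pdr hU hω).mono hR).add ((hω.continuousOn.mono hR).div c1 hne)).neg
  · rw [← hcl]; exact subset_closure
  · rw [← hcl]

/-- The energy estimate. -/
lemma energy (hU : IsOpen U) (hsub : closure (Ddom β m) ⊆ U)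
    (hu : ContDiffOn ℝ 2 u U) (hω : ContDiffOn ℝ 1 ω U)
    (hpde : ∀ p ∈ Ddom β m, cylLap u p = -(pdr ω p + ω p / p.1))
    (hbH : ∀ p ∈ bdH β m, u p = 0) (hbV : ∀ p ∈ bdV β m, pdr u p = 0)
    (hβ : 1 < β) (hm : 1 ≤ m) (hL : 0 < L) (hωL : ∀ p ∈ closure (Ddom β m), |ω p| ≤ L)
    (hk : 0 ≤ k) (hδ : 0 < δ)
    (hb : ∀ i < m, ∀ r ∈ Icc (rW (i + 1)) (2 * rW (i + 1)), u (r, 0) = 0)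
    (ht : ∀ i < m, ∀ r ∈ Icc (rW (i + 1)) (2 * rW (i + 1)), u (r, hH β (i + 1)) = 0) :
    ∑ i ∈ Finset.range m, XX u k δ (rW (i + 1)) (hH β (i + 1)) ≤
      14 * L * ∑ i ∈ Finset.range m, NN u k δ (rW (i + 1)) (hH β (i + 1)) := by
  have hR : ∀ i < m, Icc ((rW (i + 1) : ℝ), (0 : ℝ)) (2 * rW (i + 1), hH β (i + 1)) ⊆ U :=
    fun i hi => (rect_sub hi).trans hsub
  have hcF : ContinuousOn (FF u ω k δ) U :=
    (continuousOn_fst.mul ((cont_pdr hU (hu.of_le (by norm_num))).add hω.continuousOn)).mul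
      (phi_cd hu hδ).continuousOn
  have hcφ : ContinuousOn (fun p => psi k δ (u p)) U := (phi_cd hu hδ).continuousOn
  -- interval integrability along vertical lines
  have hline : ∀ i < m, ∀ r ∈ Icc (rW (i + 1)) (2 * rW (i + 1)), ∀ (f : ℝ × ℝ → ℝ),
      ContinuousOn f U → ContinuousOn (fun y => f (r, y)) (Icc 0 (hH β (i + 1))) := by
    intro i hi r hr f hf
    exact hf.comp (by fun_prop) (fun y hy => hR i hi ⟨⟨hr.1, hy.1⟩, ⟨hr.2, hy.2⟩⟩)
  have hii : ∀ i < m, ∀ r ∈ Icc (rW (i + 1)) (2 * rW (i + 1)), ∀ (f : ℝ × ℝ → ℝ),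
      ContinuousOn f U → ∀ c d : ℝ, c ∈ Icc 0 (hH β (i + 1)) → d ∈ Icc 0 (hH β (i + 1)) →
      IntervalIntegrable (fun y => f (r, y)) volume c d := by
    intro i hi r hr f hf c d hc hd
    exact ((hline i hi r hr f hf).mono (uIcc_subset_Icc hc hd)).intervalIntegrable
  set G : ℕ → ℝ := fun i => if i < m then ∫ y in 0..hH β (i + 1), FF u ω k δ (rW i, y) else 0
    with hG
  -- pointwise bound where the Neumann condition holds
  have hptF : ∀ p ∈ closure (Ddom β m), pdr u p = 0 → 0 < p.1 →
      |FF u ω k δ p| ≤ L * (p.1 * psi k δ (u p)) := by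
    intro p hp h0 hp1
    unfold FF
    have h1 := psi_nonneg (k := k) hδ (u p)
    rw [h0, zero_add, abs_mul, abs_mul, abs_of_pos hp1, abs_of_nonneg h1]
    have := mul_le_mul_of_nonneg_right (hωL p hp) (mul_nonneg hp1.le h1)
    nlinarith
  have hX0 : ∀ i, 0 ≤ XX u k δ (rW (i + 1)) (hH β (i + 1)) := fun i => XX_nonneg hδ (rW_pos _)
  -- left sides
  have hleft : ∀ i < m, -(∫ y in 0..hH β (i + 1), FF u ω k δ (rW (i + 1), y)) ≤
      -G (i + 1) + 2 * L * XX u k δ (rW (i + 1)) (hH β (i + 1)) := by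
    intro i hi
    have ha := rW_pos (i + 1)
    have hh := hH_pos β (i + 1)
    have hr : rW (i + 1) ∈ Icc (rW (i + 1)) (2 * rW (i + 1)) := ⟨le_rfl, by linarith⟩
    have htr := tr_left hU hu hk hδ ha hh (hH_le hβ i) (hR i hi) (ht i hi)
    -- the lower end of the exposed part
    obtain ⟨c, hc, hsplit, hexp⟩ : ∃ c ∈ Icc 0 (hH β (i + 1)),
        G (i + 1) = (∫ y in 0..c, FF u ω k δ (rW (i + 1), y)) ∧
        ∀ y ∈ Icc c (hH β (i + 1)), pdr u (rW (i + 1), y) = 0 := by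
      by_cases him : i + 1 < m
      · refine ⟨hH β (i + 2), ⟨(hH_pos _ _).le, hH_anti hβ i⟩, ?_, ?_⟩
        · simp only [hG, him, if_true]
        · intro y hy
          apply hbV
          right
          simp only [mem_iUnion]
          exact ⟨i + 1, by simp; omega, rfl, hy.1, hy.2⟩
      · refine ⟨0, ⟨le_rfl, hh.le⟩, ?_, ?_⟩
        · simp [hG, him]
        · intro y hy
          have : i + 1 = m := by omega
          apply hbV
          left; right
          rw [← this]
          exact ⟨rfl, hy.1, hy.2⟩
    have h0m : (0 : ℝ) ∈ Icc 0 (hH β (i + 1)) := ⟨le_rfl, hh.le⟩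
    have hhm : hH β (i + 1) ∈ Icc 0 (hH β (i + 1)) := ⟨hh.le, le_rfl⟩
    have e1 := intervalIntegral.integral_add_adjacent_intervals
      (hii i hi _ hr _ hcF 0 c h0m hc) (hii i hi _ hr _ hcF c _ hc hhm)
    have e2 := intervalIntegral.integral_add_adjacent_intervals
      (hii i hi _ hr _ hcφ 0 c h0m hc) (hii i hi _ hr _ hcφ c _ hc hhm)
    have e3 : -(∫ y in c..hH β (i + 1), FF u ω k δ (rW (i + 1), y)) ≤
        ∫ y in c..hH β (i + 1), (L * rW (i + 1)) * psi k δ (u (rW (i + 1), y)) := by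
      rw [← intervalIntegral.integral_neg]
      apply intervalIntegral.integral_mono_on hc.2 (hii i hi _ hr _ hcF c _ hc hhm).neg
        ((hii i hi _ hr _ hcφ c _ hc hhm).const_mul _)
      intro y hy
      have hmem : (rW (i + 1), y) ∈ closure (Ddom β m) :=
        rect_sub hi ⟨⟨hr.1, hc.1.trans hy.1⟩, ⟨hr.2, hy.2⟩⟩
      have := hptF _ hmem (hexp y hy) ha
      have h2 := neg_le_abs (FF u ω k δ (rW (i + 1), y))
      show -(FF u ω k δ (rW (i + 1), y)) ≤ (L * rW (i + 1)) * psi k δ (u (rW (i + 1), y))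
      simp only at this
      linarith
    rw [intervalIntegral.integral_const_mul] at e3
    have e4 : 0 ≤ ∫ y in (0 : ℝ)..c, psi k δ (u (rW (i + 1), y)) :=
      intervalIntegral.integral_nonneg hc.1 fun y _ => psi_nonneg hδ _
    have e5 : (∫ y in c..hH β (i + 1), psi k δ (u (rW (i + 1), y))) ≤
        ∫ y in (0 : ℝ)..hH β (i + 1), psi k δ (u (rW (i + 1), y)) := by linarith
    have e6 := mul_le_mul_of_nonneg_left e5 (mul_pos hL ha).le
    have e7 := mul_le_mul_of_nonneg_left htr hL.le
    rw [hsplit]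
    nlinarith
  -- right side of the first rectangle
  have hright : G 0 ≤ 4 * L * XX u k δ (rW 1) (hH β 1) := by
    have ha := rW_pos 1
    have hh := hH_pos β 1
    have h0 : 0 < m := hm
    have h21 : 2 * rW (0 + 1) = 1 := by rw [rW_two, rW_zero]
    have h21' : 2 * rW 1 = 1 := h21
    have hr : (1 : ℝ) ∈ Icc (rW (0 + 1)) (2 * rW (0 + 1)) :=
      ⟨rW_le_one _, h21.symm.le⟩
    have htr := tr_right hU hu hk hδ ha hh (hH_le hβ 0) (hR 0 h0) (ht 0 h0)
    rw [h21'] at htr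
    have h0m : (0 : ℝ) ∈ Icc 0 (hH β (0 + 1)) := ⟨le_rfl, hh.le⟩
    have hhm : hH β (0 + 1) ∈ Icc 0 (hH β (0 + 1)) := ⟨hh.le, le_rfl⟩
    have e3 : (∫ y in 0..hH β 1, FF u ω k δ (1, y)) ≤
        ∫ y in 0..hH β 1, L * psi k δ (u (1, y)) := by
      apply intervalIntegral.integral_mono_on hh.le (hii 0 h0 _ hr _ hcF 0 _ h0m hhm)
        ((hii 0 h0 _ hr _ hcφ 0 _ h0m hhm).const_mul _)
      intro y hy
      have hmem : ((1 : ℝ), y) ∈ closure (Ddom β m) :=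
        rect_sub h0 ⟨⟨hr.1, hy.1⟩, ⟨hr.2, hy.2⟩⟩
      have hV : pdr u ((1 : ℝ), y) = 0 := by
        apply hbV
        left; left
        exact ⟨rfl, hy.1, by rw [← hH_one β]; exact hy.2⟩
      have := hptF _ hmem hV one_pos
      have h2 := le_abs_self (FF u ω k δ ((1 : ℝ), y))
      simp only [one_mul] at this ⊢
      linarith
    rw [intervalIntegral.integral_const_mul] at e3
    have : G 0 = ∫ y in 0..hH β 1, FF u ω k δ (1, y) := by
      simp only [hG, h0, if_true, rW_zero, zero_add]
    rw [this]
    have e7 := mul_le_mul_of_nonneg_left htr hL.le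
    have : rW 1 = 1 / 2 := by linarith
    rw [this] at e7 ⊢
    nlinarith
  have hY : ∀ i < m, YY u k δ (rW (i + 1)) (hH β (i + 1)) ≤
      G i - G (i + 1) + 3 * L * XX u k δ (rW (i + 1)) (hH β (i + 1)) := by
    intro i hi
    have hg := green (L := L) hU hu hω hk hδ (rW_pos (i + 1)) (hH_pos β (i + 1)) (hR i hi) (ht i hi) (hb i hi)
      (pde_closed hU hsub hu hω hpde hi) (fun p hp => hωL p (rect_sub hi hp))
    have h1 := hleft i hi
    have h2 : G i = ∫ y in 0..hH β (i + 1), FF u ω k δ (2 * rW (i + 1), y) := by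
      simp only [hG, hi, if_true, rW_two]
    rw [h2]
    linarith
  have hYs : ∑ i ∈ Finset.range m, YY u k δ (rW (i + 1)) (hH β (i + 1)) ≤
      7 * L * ∑ i ∈ Finset.range m, XX u k δ (rW (i + 1)) (hH β (i + 1)) := by
    have h1 := Finset.sum_le_sum fun i hi => hY i (Finset.mem_range.1 hi)
    rw [Finset.sum_add_distrib, Finset.sum_range_sub', ← Finset.mul_sum] at h1
    have h2 : G m = 0 := by simp [hG]
    have h3 : XX u k δ (rW 1) (hH β 1) ≤
        ∑ i ∈ Finset.range m, XX u k δ (rW (i + 1)) (hH β (i + 1)) :=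
      Finset.single_le_sum (f := fun i => XX u k δ (rW (i + 1)) (hH β (i + 1)))
        (fun i _ => hX0 i) (Finset.mem_range.2 hm)
    have h4 := mul_le_mul_of_nonneg_left h3 (by positivity : 0 ≤ 4 * L)
    linarith
  have hXs : ∑ i ∈ Finset.range m, XX u k δ (rW (i + 1)) (hH β (i + 1)) ≤
      1 / (14 * L) * ∑ i ∈ Finset.range m, YY u k δ (rW (i + 1)) (hH β (i + 1)) +
      1 / (2 * (1 / (14 * L))) * ∑ i ∈ Finset.range m, NN u k δ (rW (i + 1)) (hH β (i + 1)) := by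
    rw [Finset.mul_sum, Finset.mul_sum, ← Finset.sum_add_distrib]
    apply Finset.sum_le_sum
    intro i hi
    exact XX_le hU hu hδ (rW_pos _) (hR i (Finset.mem_range.1 hi)) (by positivity)
  generalize ∑ i ∈ Finset.range m, XX u k δ (rW (i + 1)) (hH β (i + 1)) = X at *
  generalize ∑ i ∈ Finset.range m, YY u k δ (rW (i + 1)) (hH β (i + 1)) = Y at *
  generalize ∑ i ∈ Finset.range m, NN u k δ (rW (i + 1)) (hH β (i + 1)) = N at *
  have h1 : 1 / (2 * (1 / (14 * L))) = 7 * L := by field_simp; norm_num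
  have h2 : 1 / (14 * L) * Y ≤ 1 / (14 * L) * (7 * L * X) :=
    mul_le_mul_of_nonneg_left hYs (by positivity)
  have h3 : 1 / (14 * L) * (7 * L * X) = X / 2 := by field_simp; ring
  rw [h1] at hXs
  linarith

end glob


section fin
variable {u ω : ℝ × ℝ → ℝ} {U : Set (ℝ × ℝ)} {β L : ℝ} {m : ℕ}

lemma NN_mass {k δ : ℝ} (hu : ContinuousOn u U) (hδ : 0 < δ) (hβ : 1 < β) {i : ℕ}
    (hR : Icc ((rW (i + 1) : ℝ), (0 : ℝ)) (2 * rW (i + 1), hH β (i + 1)) ⊆ U) :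
    NN u k δ (rW (i + 1)) (hH β (i + 1)) ≤ rW i - rW (i + 1) := by
  have ha := rW_pos (i + 1)
  have hh := hH_pos β (i + 1)
  have h1 : NN u k δ (rW (i + 1)) (hH β (i + 1)) ≤
      ∫ p in Icc ((rW (i + 1) : ℝ), (0 : ℝ)) (2 * rW (i + 1), hH β (i + 1)), (1 : ℝ) := by
    apply setIntegral_mono_on (intR (cN hu) hR)
      (continuousOn_const.integrableOn_compact isCompact_Icc) measurableSet_Icc
    intro p hp
    have e1 : rW (i + 1) ≤ p.1 := hp.1.1
    have e2 : p.1 ≤ 2 * rW (i + 1) := hp.2.1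
    rw [rW_two] at e2
    have e3 := rW_le_one i
    have e4 := dpsi_nonneg (k := k) hδ (u p)
    have e5 := dpsi_le_one (k := k) hδ (u p)
    nlinarith
  rw [setIntegral_const, Measure.real, Measure.volume_eq_prod, ← Icc_prod_Icc, Measure.prod_prod,
    ENNReal.toReal_mul, Real.volume_Icc, Real.volume_Icc, ENNReal.toReal_ofReal (by linarith),
    ENNReal.toReal_ofReal (by linarith)] at h1
  have h2 := hH_le_one hβ i
  have h3 := rW_two i
  simp only [smul_eq_mul, mul_one, sub_zero] at h1
  nlinarith

lemma upper (hU : IsOpen U) (hsub : closure (Ddom β m) ⊆ U)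
    (hu : ContDiffOn ℝ 2 u U) (hω : ContDiffOn ℝ 1 ω U)
    (hpde : ∀ p ∈ Ddom β m, cylLap u p = -(pdr ω p + ω p / p.1))
    (hbH : ∀ p ∈ bdH β m, u p = 0) (hbV : ∀ p ∈ bdV β m, pdr u p = 0)
    (hβ : 1 < β) (hm : 1 ≤ m) (hL : 0 < L) (hωL : ∀ p ∈ closure (Ddom β m), |ω p| ≤ L) :
    ∀ p ∈ Ddom β m, u p ≤ 672 * L := by
  have hrm : ∀ i < m, rW m ≤ rW (i + 1) := by
    intro i hi
    unfold rW
    apply Real.rpow_le_rpow_of_exponent_le (by norm_num)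
    have : ((i + 1 : ℕ) : ℝ) ≤ m := by exact_mod_cast hi
    linarith
  have hb : ∀ i < m, ∀ r ∈ Icc (rW (i + 1)) (2 * rW (i + 1)), u (r, 0) = 0 := by
    intro i hi r hr
    apply hbH
    left
    refine ⟨rfl, (hrm i hi).trans hr.1, hr.2.trans ?_⟩
    rw [rW_two]; exact rW_le_one i
  have ht : ∀ i < m, ∀ r ∈ Icc (rW (i + 1)) (2 * rW (i + 1)), u (r, hH β (i + 1)) = 0 := by
    intro i hi r hr
    apply hbH
    right
    simp only [mem_iUnion]
    refine ⟨i + 1, by simp; omega, rfl, hr.1, ?_⟩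
    have : i + 1 - 1 = i := rfl
    rw [this, ← rW_two]; exact hr.2
  have hR : ∀ i < m, Icc ((rW (i + 1) : ℝ), (0 : ℝ)) (2 * rW (i + 1), hH β (i + 1)) ⊆ U :=
    fun i hi => (rect_sub hi).trans hsub
  set kn : ℕ → ℝ := fun n => 672 * L * (1 - (1 / 2) ^ n) with hkn
  set dn : ℕ → ℝ := fun n => 168 * L * (1 / 2) ^ n with hdn
  have hd0 : ∀ n, 0 < dn n := fun n => by simp only [hdn]; positivity
  have hk0 : ∀ n, 0 ≤ kn n := fun n => by
    have : ((1 : ℝ) / 2) ^ n ≤ 1 := pow_le_one₀ (by norm_num) (by norm_num)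
    simp only [hkn]
    apply mul_nonneg (by positivity); linarith
  have hks : ∀ n, kn n + 2 * dn n = kn (n + 1) := fun n => by
    simp only [hkn, hdn, pow_succ]; ring
  set M : ℕ → ℝ := fun n => ∑ i ∈ Finset.range m, NN u (kn n) (dn n) (rW (i + 1)) (hH β (i + 1))
    with hM
  have hM0 : ∀ n, 0 ≤ M n := fun n =>
    Finset.sum_nonneg fun i _ => NN_nonneg (hd0 n) (rW_pos _)
  have hMn : ∀ n, M n ≤ (((1 : ℝ) / 2) ^ n) ^ 3 := by
    intro n
    induction n with
    | zero =>
      have h1 : M 0 ≤ ∑ i ∈ Finset.range m, (rW i - rW (i + 1)) :=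
        Finset.sum_le_sum fun i hi => NN_mass hu.continuousOn (hd0 0) hβ
          (hR i (Finset.mem_range.1 hi))
      rw [Finset.sum_range_sub', rW_zero] at h1
      have := rW_pos m
      norm_num
      linarith
    | succ n ih =>
      have hE := energy hU hsub hu hω hpde hbH hbV hβ hm hL hωL (hk0 n) (hd0 n) hb ht
      have hS : M (n + 1) ^ 2 ≤ 24 / dn n ^ 3 *
          (∑ i ∈ Finset.range m, XX u (kn n) (dn n) (rW (i + 1)) (hH β (i + 1))) ^ 3 := by
        have hdp := hd0 n
        apply sum_pow (by positivity)
        · exact fun i _ => XX_nonneg (hd0 n) (rW_pos _)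
        · intro i hi
          have := NN_le hU hu (hk0 n) (hd0 n) (rW_pos (i + 1)) (hH_pos β (i + 1)) (hH_le hβ i)
            (hR i hi) (ht i hi) (hb i hi) (hd0 (n + 1)) (hks n).le
          rw [div_mul_eq_mul_div, le_div_iff₀ (by positivity)]
          exact this
        · exact fun i _ => NN_nonneg (hd0 _) (rW_pos _)
      have hX0 : 0 ≤ ∑ i ∈ Finset.range m, XX u (kn n) (dn n) (rW (i + 1)) (hH β (i + 1)) :=
        Finset.sum_nonneg fun i _ => XX_nonneg (hd0 n) (rW_pos _)
      have hq : 0 < ((1 : ℝ) / 2) ^ n := by positivity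
      have hdn' : dn n = 168 * L * (1 / 2) ^ n := rfl
      have hE' : ∑ i ∈ Finset.range m, XX u (kn n) (dn n) (rW (i + 1)) (hH β (i + 1)) ≤
          14 * L * M n := hE
      have h1 := hM0 (n + 1)
      have h0 := hM0 n
      rw [pow_succ ((1:ℝ)/2) n]
      rw [hdn'] at hS hE' hX0
      generalize ((1 : ℝ) / 2) ^ n = q at *
      generalize M n = A at *
      generalize M (n + 1) = B at *
      generalize ∑ i ∈ Finset.range m, XX u (kn n) (168 * L * q) (rW (i + 1)) (hH β (i + 1)) = X at *
      have h2 : X ≤ 14 * L * q ^ 3 := hE'.trans (mul_le_mul_of_nonneg_left ih (by positivity))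
      have h3 : X ^ 3 ≤ (14 * L * q ^ 3) ^ 3 := pow_le_pow_left₀ hX0 h2 3
      have h4 : B ^ 2 ≤ 24 / (168 * L * q) ^ 3 * (14 * L * q ^ 3) ^ 3 :=
        hS.trans (mul_le_mul_of_nonneg_left h3 (by positivity))
      have h5 : 24 / (168 * L * q) ^ 3 * (14 * L * q ^ 3) ^ 3 = q ^ 6 / 72 := by
        field_simp; norm_num
      rw [h5] at h4
      apply le_of_sq_le_sq _ (by positivity)
      refine h4.trans ?_
      have : 0 < q ^ 6 := by positivity
      nlinarith
  -- conclusion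
  set d := 672 * L with hd
  have hz : ∀ i < m, NN u d 1 (rW (i + 1)) (hH β (i + 1)) ≤ 0 := by
    intro i hi
    have hle : ∀ n, NN u d 1 (rW (i + 1)) (hH β (i + 1)) ≤ (((1 : ℝ) / 2) ^ 3) ^ n := by
      intro n
      have h1 : NN u d 1 (rW (i + 1)) (hH β (i + 1)) ≤
          NN u (kn n) (dn n) (rW (i + 1)) (hH β (i + 1)) := by
        apply setIntegral_mono_on (intR (cN hu.continuousOn) (hR i hi))
          (intR (cN hu.continuousOn) (hR i hi)) measurableSet_Icc
        intro p hp
        have hp1 : 0 ≤ p.1 := (rW_pos (i + 1)).le.trans hp.1.1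
        apply mul_le_mul_of_nonneg_left _ hp1
        rcases le_or_gt (u p) d with h | h
        · rw [dpsi_zero one_pos h]; exact dpsi_nonneg (hd0 n) _
        · rw [dpsi_one (hd0 n)]
          · exact dpsi_le_one one_pos _
          · rw [hks n]
            have : 0 ≤ d * ((1 : ℝ) / 2) ^ (n + 1) := by positivity
            simp only [hkn]
            linarith
      have h2 : NN u (kn n) (dn n) (rW (i + 1)) (hH β (i + 1)) ≤ M n :=
        Finset.single_le_sum (f := fun i => NN u (kn n) (dn n) (rW (i + 1)) (hH β (i + 1)))
          (fun i _ => NN_nonneg (hd0 n) (rW_pos _)) (Finset.mem_range.2 hi)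
      have h3 := hMn n
      rw [← pow_mul, mul_comm n 3, pow_mul] at h3
      linarith
    exact ge_of_tendsto' (tendsto_pow_atTop_nhds_zero_of_lt_one (by norm_num) (by norm_num)) hle
  intro p hp
  unfold Ddom at hp
  simp only [mem_iUnion, Finset.mem_Icc] at hp
  obtain ⟨j, ⟨hj1, hjm⟩, hpj⟩ := hp
  obtain ⟨i, rfl⟩ : ∃ i, j = i + 1 := ⟨j - 1, by omega⟩
  have hi : i < m := hjm
  have hcl := closure_ioo (rW_pos (i + 1)) (hH_pos β (i + 1))
  have hsO : Ioo (rW (i + 1)) (2 * rW (i + 1)) ×ˢ Ioo 0 (hH β (i + 1)) ⊆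
      Icc ((rW (i + 1) : ℝ), (0 : ℝ)) (2 * rW (i + 1), hH β (i + 1)) := by
    rw [← hcl]; exact subset_closure
  have hcN : ContinuousOn (fun p : ℝ × ℝ => p.1 * dpsi d 1 (u p))
      (Icc ((rW (i + 1) : ℝ), (0 : ℝ)) (2 * rW (i + 1), hH β (i + 1))) :=
    (cN hu.continuousOn).mono (hR i hi)
  have hae : (fun p : ℝ × ℝ => p.1 * dpsi d 1 (u p)) =ᵐ[volume.restrict
      (Icc ((rW (i + 1) : ℝ), (0 : ℝ)) (2 * rW (i + 1), hH β (i + 1)))] 0 := by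
    rw [← setIntegral_eq_zero_iff_of_nonneg_ae]
    · exact le_antisymm (hz i hi) (NN_nonneg one_pos (rW_pos _))
    · filter_upwards [ae_restrict_mem measurableSet_Icc] with p hp
      exact mul_nonneg ((rW_pos (i + 1)).le.trans hp.1.1) (dpsi_nonneg one_pos _)
    · exact intR (cN hu.continuousOn) (hR i hi)
  have heq := Measure.eqOn_open_of_ae_eq (ae_restrict_of_ae_restrict_of_subset hsO hae)
    (isOpen_Ioo.prod isOpen_Ioo) (hcN.mono hsO) continuousOn_const
  have heq2 := heq.of_subset_closure hcN continuousOn_const hsO hcl.symm.le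
  have hpR := srect_sub_rect i hpj
  have h1 : p.1 * dpsi d 1 (u p) = 0 := heq2 hpR
  have hp1 : p.1 ≠ 0 := ((rW_pos (i + 1)).trans_le hpR.1.1).ne'
  have h2 := (mul_eq_zero.1 h1).resolve_left hp1
  by_contra hcon
  push Not at hcon
  unfold dpsi at h2
  rw [max_eq_left (by linarith)] at h2
  rcases max_cases (u p - (d + 2 * 1)) 0 with h | h <;> rw [h.1] at h2 <;> linarith

lemma pdr_neg (f : ℝ × ℝ → ℝ) : pdr (fun p => -f p) = fun p => -pdr f p := by
  funext p; unfold pdr; exact deriv.fun_neg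

lemma pdz_neg (f : ℝ × ℝ → ℝ) : pdz (fun p => -f p) = fun p => -pdz f p := by
  funext p; unfold pdz; exact deriv.fun_neg

lemma isCompact_cl (hβ : 1 < β) : IsCompact (closure (Ddom β m)) := by
  apply IsCompact.closure_of_subset (K := Icc ((0 : ℝ), (0 : ℝ)) (1, 1)) isCompact_Icc
  intro p hp
  unfold Ddom at hp
  simp only [mem_iUnion, Finset.mem_Icc] at hp
  obtain ⟨j, ⟨hj1, hjm⟩, hpj⟩ := hp
  obtain ⟨i, rfl⟩ : ∃ i, j = i + 1 := ⟨j - 1, by omega⟩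
  have h := srect_sub_rect i hpj
  refine ⟨⟨(rW_pos _).le.trans h.1.1, h.1.2⟩, ⟨h.2.1.trans ?_, h.2.2.trans (hH_le_one hβ i)⟩⟩
  show 2 * rW (i + 1) ≤ 1
  rw [rW_two]; exact rW_le_one i

lemma meas_S (j : ℕ) : MeasurableSet (Srect β j) := by
  have : Srect β j = Ico (rW j) (rW (j - 1)) ×ˢ Ioo 0 (hH β j) := by
    ext p; simp [Srect, and_assoc]
  rw [this]; exact measurableSet_Ico.prod measurableSet_Ioo

lemma meas_D : MeasurableSet (Ddom β m) := by
  unfold Ddom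
  exact Finset.measurableSet_biUnion _ fun j _ => meas_S j

lemma cyl_ge (hβ : 1 < β) (hm : 1 ≤ m) (hu : ContinuousOn u (closure (Ddom β m))) :
    1 ≤ cylIntegral β m fun q => (|u q| + 1) ^ 2 := by
  unfold cylIntegral
  have hc : ContinuousOn (fun p : ℝ × ℝ => (|u p| + 1) ^ 2 * (2 * π * p.1))
      (closure (Ddom β m)) :=
    ((hu.abs.add continuousOn_const).pow 2).mul (continuousOn_const.mul continuousOn_fst)
  have hi : IntegrableOn (fun p : ℝ × ℝ => (|u p| + 1) ^ 2 * (2 * π * p.1)) (Ddom β m) :=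
    (hc.integrableOn_compact (isCompact_cl hβ)).mono_set subset_closure
  have hS : Srect β 1 ⊆ Ddom β m := srect_sub (i := 0) hm
  have hr1 : rW 1 = 1 / 2 := by have := rW_two 0; rw [rW_zero] at this; norm_num at this; linarith
  have hSe : Srect β 1 = Ico (1 / 2 : ℝ) 1 ×ˢ Ioo (0 : ℝ) 1 := by
    ext p; simp [Srect, and_assoc, hr1, rW_zero, hH_one]
  have h1 : ∫ p in Srect β 1, (2 : ℝ) ≤
      ∫ p in Srect β 1, (|u p| + 1) ^ 2 * (2 * π * p.1) := by
    apply setIntegral_mono_on _ (hi.mono_set hS) (meas_S 1)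
    · intro p hp
      have hp1 : 1 / 2 ≤ p.1 := by rw [← hr1]; exact hp.1
      have h2 := abs_nonneg (u p)
      have h3 := Real.pi_gt_three
      have h4 : 1 ≤ (|u p| + 1) ^ 2 := by nlinarith
      have h5 : 2 ≤ 2 * π * p.1 := by nlinarith
      nlinarith
    · apply (continuousOn_const.integrableOn_compact (isCompact_cl (m := m) hβ)).mono_set
      exact hS.trans subset_closure
  have h2 : ∫ p in Srect β 1, (2 : ℝ) = 1 := by
    rw [setIntegral_const, hSe, Measure.real, Measure.volume_eq_prod, Measure.prod_prod]
    simp; norm_num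
  have h3 : ∫ p in Srect β 1, (|u p| + 1) ^ 2 * (2 * π * p.1) ≤
      ∫ p in Ddom β m, (|u p| + 1) ^ 2 * (2 * π * p.1) := by
    apply setIntegral_mono_set hi _ hS.eventuallyLE
    filter_upwards [ae_restrict_mem meas_D] with p hp
    have hp1 : 0 ≤ p.1 := by
      unfold Ddom at hp
      simp only [mem_iUnion, Finset.mem_Icc] at hp
      obtain ⟨j, _, hpj⟩ := hp
      exact (rW_pos j).le.trans hpj.1
    have := Real.pi_pos
    show 0 ≤ (|u p| + 1) ^ 2 * (2 * π * p.1)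
    positivity
  linarith

end fin


/-- Uniform `L^∞` bound for the solution of
`Δ u = -(∂_r ω + ω/r)` with mixed boundary conditions. -/
theorem moser_bound_v3 :
    ∃ C : ℝ,
      ∀ (β : ℝ), 1 < β → β ≤ 1.1 → ∀ (m : ℕ), 1 ≤ m →
      ∀ u ω : ℝ × ℝ → ℝ,
        (∃ U : Set (ℝ × ℝ), IsOpen U ∧ closure (Ddom β m) ⊆ U ∧ ContDiffOn ℝ 2 u U) →
        (∃ U : Set (ℝ × ℝ), IsOpen U ∧ closure (Ddom β m) ⊆ U ∧ ContDiffOn ℝ 1 ω U) →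
        (∀ p ∈ Ddom β m, cylLap u p = -(pdr ω p + ω p / p.1)) →
        (∀ p ∈ bdH β m, u p = 0) →
        (∀ p ∈ bdV β m, pdr u p = 0) →
        ∀ p ∈ Ddom β m,
          |u p| ≤ C * (sSup ((fun q => |ω q|) '' Ddom β m) + 1) ^ ((3 : ℝ) / 2)
            * (cylIntegral β m fun q => (|u q| + 1) ^ 2) ^ ((1 : ℝ) / 2) := by

  refine ⟨672, ?_⟩
  rintro β hβ - m hm u ω ⟨U₁, hU₁, hs₁, hu⟩ ⟨U₂, hU₂, hs₂, hω⟩ hpde hbH hbV p hp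
  have hU : IsOpen (U₁ ∩ U₂) := hU₁.inter hU₂
  have hs : closure (Ddom β m) ⊆ U₁ ∩ U₂ := subset_inter hs₁ hs₂
  replace hu : ContDiffOn ℝ 2 u (U₁ ∩ U₂) := hu.mono inter_subset_left
  replace hω : ContDiffOn ℝ 1 ω (U₁ ∩ U₂) := hω.mono inter_subset_right
  set Λ := sSup ((fun q => |ω q|) '' Ddom β m) with hΛ
  have hbd : BddAbove ((fun q => |ω q|) '' Ddom β m) :=
    ((isCompact_cl hβ).bddAbove_image (hω.continuousOn.mono hs).abs).mono
      (image_mono subset_closure)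
  have hle : ∀ q ∈ Ddom β m, |ω q| ≤ Λ := fun q hq => le_csSup hbd ⟨q, hq, rfl⟩
  have hΛ0 : 0 ≤ Λ := (abs_nonneg _).trans (hle p hp)
  have hle' : ∀ q ∈ closure (Ddom β m), |ω q| ≤ Λ + 1 := by
    intro q hq
    have h1 : q ∈ closure (Ddom β m) := hq
    have := le_on_closure (f := fun q => |ω q|) (g := fun _ => Λ) hle
      (hω.continuousOn.mono hs).abs continuousOn_const hq
    linarith
  have hup := upper hU hs hu hω hpde hbH hbV hβ hm (by linarith : 0 < Λ + 1) hle' p hp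
  have hlow := upper (u := fun q => -u q) (ω := fun q => -ω q) hU hs hu.neg hω.neg
    (by
      intro q hq
      have := hpde q hq
      unfold cylLap at this ⊢
      simp only [pdr_neg, pdz_neg]
      rw [neg_div]
      linarith)
    (fun q hq => by simp [hbH q hq]) (fun q hq => by simp [pdr_neg, hbV q hq]) hβ hm
    (by linarith : 0 < Λ + 1) (fun q hq => by rw [abs_neg]; exact hle' q hq) p hp
  have habs : |u p| ≤ 672 * (Λ + 1) := abs_le.2 ⟨by linarith, hup⟩
  have h1 : Λ + 1 ≤ (Λ + 1) ^ ((3 : ℝ) / 2) := by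
    have := Real.rpow_le_rpow_of_exponent_le (by linarith : 1 ≤ Λ + 1)
      (by norm_num : (1 : ℝ) ≤ 3 / 2)
    rwa [Real.rpow_one] at this
  have h2 : 1 ≤ (cylIntegral β m fun q => (|u q| + 1) ^ 2) ^ ((1 : ℝ) / 2) :=
    Real.one_le_rpow (cyl_ge hβ hm (hu.continuousOn.mono hs)) (by norm_num)
  calc |u p| ≤ 672 * (Λ + 1) := habs
    _ ≤ 672 * (Λ + 1) ^ ((3 : ℝ) / 2) := by linarith
    _ ≤ _ := le_mul_of_one_le_right (by positivity) h2
end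
end

section
/- Let m ≥ 1 and let f be an axially symmetric function, continuously differentiable on a neighborhood of the closure of D_m, with f = 0 on the horizontal boundary ∂^H D_m. Then for every integer j₀ with 1 ≤ j₀ ≤ m, ∫_{D_m} ( f²/r² ) dx ≤ ( max_{j₀ ≤ j ≤ m} h_j²/r_j² ) ∫_{D_m} |∂_{x₃} f|² dx + 4^{j₀} ∫_{D_m} f² dx. -/
noncomputable section

open Real MeasureTheory Set

lemma wp_one_dim (h : ℝ) (hh : 0 < h) (g g' : ℝ → ℝ)
    (hg : ∀ z ∈ Icc 0 h, HasDerivAt g (g' z) z) (hc : ContinuousOn g' (Icc 0 h))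
    (h0 : g 0 = 0) :
    ∫ z in Ioo 0 h, g z ^ 2 ≤ h ^ 2 * ∫ z in Ioo 0 h, g' z ^ 2 := by
  have hgc : ContinuousOn g (Icc 0 h) := fun z hz => (hg z hz).continuousAt.continuousWithinAt
  have key : ∀ z ∈ Ioo 0 h, g z ^ 2 ≤ h * ∫ z in Ioo 0 h, g' z ^ 2 := by
    intro z hz
    obtain ⟨hz0, hzh⟩ := hz
    have hsub : uIcc 0 z ⊆ Icc 0 h := by
      rw [uIcc_of_le hz0.le]; exact Icc_subset_Icc_right hzh.le
    have hi1 : IntervalIntegrable g' volume 0 z := (hc.mono hsub).intervalIntegrable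
    have hi2 : IntervalIntegrable (fun x => g' x ^ 2) volume 0 z :=
      ((hc.mono hsub).pow 2).intervalIntegrable
    have ftc : ∫ x in (0:ℝ)..z, g' x = g z := by
      rw [intervalIntegral.integral_eq_sub_of_hasDerivAt (fun x hx => hg x (hsub hx)) hi1, h0]
      ring
    set c := g z / z with hcdef
    have e : ∫ x in (0:ℝ)..z, (g' x - c) ^ 2
        = (∫ x in (0:ℝ)..z, g' x ^ 2) - 2 * c * g z + c ^ 2 * z := by
      have : ∀ x, (g' x - c) ^ 2 = g' x ^ 2 - 2 * c * g' x + c ^ 2 := fun x => by ring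
      simp_rw [this]
      rw [intervalIntegral.integral_add (hi2.sub (hi1.const_mul _)) (by simp),
        intervalIntegral.integral_sub hi2 (hi1.const_mul _),
        intervalIntegral.integral_const_mul, ftc, intervalIntegral.integral_const]
      simp; ring
    have p : 0 ≤ ∫ x in (0:ℝ)..z, (g' x - c) ^ 2 :=
      intervalIntegral.integral_nonneg hz0.le (fun x _ => sq_nonneg _)
    rw [e] at p
    have hgz : g z = c * z := by rw [hcdef]; field_simp
    have le1 : g z ^ 2 ≤ z * ∫ x in (0:ℝ)..z, g' x ^ 2 := by
      rw [hgz] at p ⊢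
      nlinarith
    have le2 : ∫ x in (0:ℝ)..z, g' x ^ 2 ≤ ∫ z in Ioo 0 h, g' z ^ 2 := by
      rw [intervalIntegral.integral_of_le hz0.le]
      apply setIntegral_mono_set
      · exact ((hc.pow 2).integrableOn_Icc).mono_set Ioo_subset_Icc_self
      · exact Filter.Eventually.of_forall (fun x => sq_nonneg _)
      · exact (show Ioc 0 z ⊆ Ioo 0 h from fun x hx => ⟨hx.1, hx.2.trans_lt hzh⟩).eventuallyLE
    have nn : 0 ≤ ∫ z in Ioo 0 h, g' z ^ 2 :=
      setIntegral_nonneg measurableSet_Ioo (fun x _ => sq_nonneg _)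
    calc _ ≤ _ := le1
      _ ≤ z * ∫ z in Ioo 0 h, g' z ^ 2 := by gcongr
      _ ≤ _ := by gcongr
  calc ∫ z in Ioo 0 h, g z ^ 2 ≤ ∫ _z in Ioo 0 h, (h * ∫ z in Ioo 0 h, g' z ^ 2) := by
        apply setIntegral_mono_on _ _ measurableSet_Ioo key
        · exact ((hgc.pow 2).integrableOn_Icc).mono_set Ioo_subset_Icc_self
        · exact integrableOn_const (by simp)
    _ = _ := by
        rw [setIntegral_const]; simp [hh.le]; ring

lemma wp_rW_pos (j : ℕ) : 0 < rW j := by unfold rW; positivity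

lemma wp_hH_pos (β : ℝ) (j : ℕ) : 0 < hH β j := by unfold hH; positivity

lemma wp_rW_anti {i j : ℕ} (h : i ≤ j) : rW j ≤ rW i := by
  unfold rW
  apply Real.rpow_le_rpow_of_exponent_le (by norm_num)
  have : (i:ℝ) ≤ j := by exact_mod_cast h
  linarith

lemma wp_rW_lt {j : ℕ} (h : 1 ≤ j) : rW j < rW (j - 1) := by
  unfold rW
  apply Real.rpow_lt_rpow_of_exponent_lt (by norm_num)
  have : ((j - 1 : ℕ) : ℝ) < j := by exact_mod_cast (by omega)
  linarith

lemma wp_rW_sq (j : ℕ) : 1 / rW j ^ 2 = 4 ^ j := by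
  unfold rW
  rw [Real.rpow_neg (by norm_num), Real.rpow_natCast, inv_pow, one_div, inv_inv, ← pow_mul,
    mul_comm, pow_mul]
  norm_num

lemma wp_Srect_eq (β : ℝ) (j : ℕ) :
    Srect β j = Ico (rW j) (rW (j - 1)) ×ˢ Ioo 0 (hH β j) := by
  ext p; simp [Srect, and_assoc]

lemma wp_main (β : ℝ) (m : ℕ) (f : ℝ × ℝ → ℝ)
    (hf : ∃ U : Set (ℝ × ℝ), IsOpen U ∧ closure (Ddom β m) ⊆ U ∧ ContDiffOn ℝ 1 f U)
    (hf0 : ∀ p ∈ bdH β m, f p = 0)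
    (j₀ : ℕ) (hj₀m : j₀ ≤ m) :
    cylIntegral β m (fun p => (f p) ^ 2 / p.1 ^ 2)
      ≤ ((Finset.Icc j₀ m).sup' (Finset.nonempty_Icc.mpr hj₀m)
            fun j => (hH β j) ^ 2 / (rW j) ^ 2)
          * cylIntegral β m (fun p => (pdz f p) ^ 2)
        + (4 : ℝ) ^ j₀ * cylIntegral β m fun p => (f p) ^ 2 := by
  obtain ⟨U, hU, hDU, hfU⟩ := hf
  set M := ((Finset.Icc j₀ m).sup' (Finset.nonempty_Icc.mpr hj₀m)
            fun j => (hH β j) ^ 2 / (rW j) ^ 2) with hM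
  have hMle : ∀ j, j₀ ≤ j → j ≤ m → (hH β j) ^ 2 / (rW j) ^ 2 ≤ M := fun j h1 h2 =>
    Finset.le_sup' (fun j => (hH β j) ^ 2 / (rW j) ^ 2) (Finset.mem_Icc.mpr ⟨h1, h2⟩)
  have hM0 : 0 ≤ M := le_trans (by positivity) (hMle j₀ le_rfl hj₀m)
  -- derivative
  have hder : ∀ p ∈ U, HasDerivAt (fun z => f (p.1, z)) (fderiv ℝ f p (0, 1)) p.2 := by
    intro p hp
    have h1 : HasFDerivAt f (fderiv ℝ f p) p :=
      ((hfU.differentiableOn (by norm_num)).differentiableAt (hU.mem_nhds hp)).hasFDerivAt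
    have h2 : HasDerivAt (fun z : ℝ => (p.1, z)) ((0 : ℝ), (1 : ℝ)) p.2 :=
      (hasDerivAt_const _ _).prodMk (hasDerivAt_id _)
    exact HasFDerivAt.comp_hasDerivAt p.2 (f := fun z : ℝ => (p.1, z)) h1 h2
  have hpdz : ∀ p ∈ U, pdz f p = fderiv ℝ f p (0, 1) := fun p hp => (hder p hp).deriv
  have hcd : ContinuousOn (pdz f) U := by
    have h1 : ContinuousOn (fun p => fderiv ℝ f p (0, 1)) U :=
      (hfU.continuousOn_fderiv_of_isOpen hU le_rfl).clm_apply continuousOn_const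
    exact h1.congr hpdz
  have hcf : ContinuousOn f U := hfU.continuousOn
  -- closed rectangles
  have hRU : ∀ j ∈ Finset.Icc 1 m, Icc (rW j) (rW (j - 1)) ×ˢ Icc 0 (hH β j) ⊆ U := by
    intro j hj
    refine Subset.trans ?_ hDU
    rw [← closure_Ico (wp_rW_lt (Finset.mem_Icc.mp hj).1).ne, ← closure_Ioo (wp_hH_pos β j).ne,
      ← closure_prod_eq, ← wp_Srect_eq]
    exact closure_mono (Set.subset_biUnion_of_mem (u := fun j => Srect β j) hj)
  have hsubR : ∀ j, Srect β j ⊆ Icc (rW j) (rW (j - 1)) ×ˢ Icc 0 (hH β j) := by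
    intro j; rw [wp_Srect_eq]; exact prod_mono Ico_subset_Icc_self Ioo_subset_Icc_self
  have hint : ∀ j ∈ Finset.Icc 1 m, ∀ G : ℝ × ℝ → ℝ,
      ContinuousOn G (Icc (rW j) (rW (j - 1)) ×ˢ Icc 0 (hH β j)) →
      IntegrableOn G (Srect β j) := fun j hj G hG =>
    (hG.integrableOn_compact (isCompact_Icc.prod isCompact_Icc)).mono_set (hsubR j)
  have hmeas : ∀ j, MeasurableSet (Srect β j) := fun j => by
    rw [wp_Srect_eq]; exact measurableSet_Ico.prod measurableSet_Ioo
  have hc1 : ∀ j ∈ Finset.Icc 1 m, ContinuousOn (fun p => f p ^ 2 / p.1 ^ 2 * (2 * π * p.1))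
      (Icc (rW j) (rW (j - 1)) ×ˢ Icc 0 (hH β j)) := by
    intro j hj
    refine ((((hcf.mono (hRU j hj)).pow 2).div (by fun_prop) ?_)).mul (by fun_prop)
    intro p hp
    have := (wp_rW_pos j).trans_le hp.1.1
    positivity
  have hc2 : ∀ j ∈ Finset.Icc 1 m, ContinuousOn (fun p => pdz f p ^ 2 * (2 * π * p.1))
      (Icc (rW j) (rW (j - 1)) ×ˢ Icc 0 (hH β j)) := by
    intro j hj
    exact ((hcd.mono (hRU j hj)).pow 2).mul (by fun_prop)
  have hc3 : ∀ j ∈ Finset.Icc 1 m, ContinuousOn (fun p => f p ^ 2 * (2 * π * p.1))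
      (Icc (rW j) (rW (j - 1)) ×ˢ Icc 0 (hH β j)) := by
    intro j hj
    exact ((hcf.mono (hRU j hj)).pow 2).mul (by fun_prop)
  have hdisj : Set.Pairwise (↑(Finset.Icc 1 m)) (Function.onFun Disjoint (Srect β)) := by
    have aux : ∀ i j : ℕ, i < j → Disjoint (Srect β i) (Srect β j) := by
      intro i j hij
      rw [Set.disjoint_left]
      intro p h1 h2
      have := wp_rW_anti (show i ≤ j - 1 by omega)
      exact absurd (h2.2.1.trans_le this) (not_lt.mpr h1.1)
    intro i _ j _ hij
    rcases lt_or_gt_of_ne hij with h | h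
    · exact aux i j h
    · exact (aux j i h).symm
  have hsplit : ∀ G : ℝ × ℝ → ℝ, (∀ j ∈ Finset.Icc 1 m, IntegrableOn G (Srect β j)) →
      ∫ p in Ddom β m, G p = ∑ j ∈ Finset.Icc 1 m, ∫ p in Srect β j, G p := by
    intro G hG
    exact integral_biUnion_finset _ (fun j _ => hmeas j) hdisj hG
  unfold cylIntegral
  rw [hsplit _ (fun j hj => hint j hj _ (hc1 j hj)), hsplit _ (fun j hj => hint j hj _ (hc2 j hj)),
    hsplit _ (fun j hj => hint j hj _ (hc3 j hj)), Finset.mul_sum, Finset.mul_sum,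
    ← Finset.sum_add_distrib]
  apply Finset.sum_le_sum
  intro j hj
  obtain ⟨hj1, hjm⟩ := Finset.mem_Icc.mp hj
  have hrp := wp_rW_pos j
  have hB : 0 ≤ ∫ p in Srect β j, pdz f p ^ 2 * (2 * π * p.1) :=
    setIntegral_nonneg (hmeas j) (fun p hp => by
      have := hrp.trans_le hp.1
      positivity)
  have hC : 0 ≤ ∫ p in Srect β j, f p ^ 2 * (2 * π * p.1) :=
    setIntegral_nonneg (hmeas j) (fun p hp => by
      have := hrp.trans_le hp.1
      positivity)
  have hA : ∫ p in Srect β j, f p ^ 2 / p.1 ^ 2 * (2 * π * p.1)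
      ≤ 4 ^ j * ∫ p in Srect β j, f p ^ 2 * (2 * π * p.1) := by
    rw [← integral_const_mul]
    apply setIntegral_mono_on (hint j hj _ (hc1 j hj)) ((hint j hj _ (hc3 j hj)).const_mul _)
      (hmeas j)
    intro p hp
    have hp1 := hrp.trans_le hp.1
    have : 1 / p.1 ^ 2 ≤ 4 ^ j := by
      rw [← wp_rW_sq]
      have := hp.1
      gcongr
    calc f p ^ 2 / p.1 ^ 2 * (2 * π * p.1) = 1 / p.1 ^ 2 * (f p ^ 2 * (2 * π * p.1)) := by ring
      _ ≤ _ := by gcongr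
  rcases le_total j j₀ with hle | hle
  · have : (4:ℝ) ^ j ≤ 4 ^ j₀ := pow_le_pow_right₀ (by norm_num) hle
    nlinarith [mul_le_mul_of_nonneg_right this hC, mul_nonneg hM0 hB]
  · have hP : ∫ p in Srect β j, f p ^ 2 * (2 * π * p.1)
        ≤ hH β j ^ 2 * ∫ p in Srect β j, pdz f p ^ 2 * (2 * π * p.1) := by
      have i3 := hint j hj _ (hc3 j hj)
      have i2 := (hint j hj _ (hc2 j hj)).const_mul (hH β j ^ 2)
      rw [← integral_const_mul]
      rw [wp_Srect_eq] at i2 i3 ⊢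
      rw [Measure.volume_eq_prod] at i2 i3 ⊢
      rw [setIntegral_prod _ i3, setIntegral_prod _ i2]
      rw [IntegrableOn] at i3
      rw [← Measure.prod_restrict] at i2 i3
      apply setIntegral_mono_on i3.integral_prod_left i2.integral_prod_left measurableSet_Ico
      intro r hr
      have hr0 : 0 < r := hrp.trans_le hr.1
      have hmem : ∀ z ∈ Icc 0 (hH β j), (r, z) ∈ U := fun z hz =>
        hRU j hj ⟨Ico_subset_Icc_self hr, hz⟩
      have h1 := wp_one_dim (hH β j) (wp_hH_pos β j) (fun z => f (r, z)) (fun z => pdz f (r, z))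
        (fun z hz => by
          have := hder (r, z) (hmem z hz)
          rw [← hpdz _ (hmem z hz)] at this
          exact this)
        (hcd.comp (by fun_prop) hmem)
        (hf0 _ (Or.inl ⟨rfl, (wp_rW_anti hjm).trans hr.1, by
          have h2 := wp_rW_anti (Nat.zero_le (j - 1))
          have h3 : rW 0 = 1 := by simp [rW]
          exact (hr.2.le.trans h2).trans h3.le⟩))
      simp only [integral_const_mul, integral_mul_const]
      have h8 := mul_le_mul_of_nonneg_right h1 (show 0 ≤ 2 * π * r by positivity)
      linarith
    have h4 : (0:ℝ) ≤ 4 ^ j := by positivity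
    have hq : 4 ^ j * hH β j ^ 2 ≤ M := by
      rw [← wp_rW_sq, div_mul_eq_mul_div, one_mul]; exact hMle j hle hjm
    have h5 := mul_le_mul_of_nonneg_left hP h4
    have h6 := mul_le_mul_of_nonneg_right hq hB
    have h7 : 0 ≤ 4 ^ j₀ * ∫ p in Srect β j, f p ^ 2 * (2 * π * p.1) := by positivity
    linarith

/-- Weighted Poincaré-type inequality on `D_m` for functions vanishing
on the horizontal boundary. -/
theorem weighted_poincare (β : ℝ) (hβ : 1 < β) (hβ' : β ≤ 1.1)
    (m : ℕ) (hm : 1 ≤ m) (f : ℝ × ℝ → ℝ)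
    (hf : ∃ U : Set (ℝ × ℝ), IsOpen U ∧ closure (Ddom β m) ⊆ U ∧ ContDiffOn ℝ 1 f U)
    (hf0 : ∀ p ∈ bdH β m, f p = 0)
    (j₀ : ℕ) (hj₀1 : 1 ≤ j₀) (hj₀m : j₀ ≤ m) :
    cylIntegral β m (fun p => (f p) ^ 2 / p.1 ^ 2)
      ≤ ((Finset.Icc j₀ m).sup' (Finset.nonempty_Icc.mpr hj₀m)
            fun j => (hH β j) ^ 2 / (rW j) ^ 2)
          * cylIntegral β m (fun p => (pdz f p) ^ 2)
        + (4 : ℝ) ^ j₀ * cylIntegral β m fun p => (f p) ^ 2 := by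
  exact wp_main β m f hf hf0 j₀ hj₀m
end
end

section
/- Let 0 < a < b and let a = ρ₀ < ρ₁ < ⋯ < ρ_k = b be a partition of [a, b]. Suppose g : [a, b] → ℝ is continuously differentiable on [a, b], twice continuously differentiable on each open subinterval (ρ_{i−1}, ρ_i), satisfies g″(r) + g′(r)/r − g(r)/r² = 0 for every r in each open subinterval (ρ_{i−1}, ρ_i), and g(a) = g(b) = 0. Then g ≡ 0 on [a, b]. -/
noncomputable section

open Real Set

theorem const_off_countable (a b : ℝ) (f : ℝ → ℝ) (s : Set ℝ) (hs : s.Countable)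
    (hc : ContinuousOn f (Icc a b))
    (hd : ∀ x ∈ Ioo a b, x ∉ s → HasDerivAt f 0 x) : ∀ x ∈ Icc a b, f x = f a := by
  intro x hx
  have := MeasureTheory.integral_eq_of_hasDerivAt_off_countable_of_le f (fun _ => (0:ℝ)) hx.1 hs
    (hc.mono (Icc_subset_Icc_right hx.2))
    (fun y hy => hd y ⟨hy.1.1, hy.1.2.trans_le hx.2⟩ hy.2) (by simp)
  simp at this
  linarith

/-- A `C¹` function on `[a,b]`, piecewise `C²` and solving the Euler
equation `g'' + g'/r - g/r² = 0` on each subinterval of a partition, which vanishes at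
both endpoints, vanishes identically. -/
theorem euler_ode_piecewise_zero (a b : ℝ) (ha : 0 < a) (hab : a < b)
    (k : ℕ) (hk : 0 < k) (ρ : ℕ → ℝ)
    (hρ0 : ρ 0 = a) (hρk : ρ k = b)
    (hmono : ∀ i < k, ρ i < ρ (i + 1))
    (g : ℝ → ℝ)
    (hg1 : ContDiffOn ℝ 1 g (Set.Icc a b))
    (hg2 : ∀ i < k, ContDiffOn ℝ 2 g (Set.Ioo (ρ i) (ρ (i + 1))))
    (heq : ∀ i < k, ∀ r ∈ Set.Ioo (ρ i) (ρ (i + 1)),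
      deriv (deriv g) r + deriv g r / r - g r / r ^ 2 = 0)
    (hga : g a = 0) (hgb : g b = 0) :
    ∀ r ∈ Set.Icc a b, g r = 0 := by
  set G : ℝ → ℝ := derivWithin g (Icc a b) with hG
  have hGc : ContinuousOn G (Icc a b) :=
    hg1.continuousOn_derivWithin (uniqueDiffOn_Icc hab) le_rfl
  have hgc := hg1.continuousOn
  have hGd : ∀ x ∈ Ioo a b, HasDerivAt g (G x) x := by
    intro x hx
    exact ((hg1.differentiableOn one_ne_zero) x
      (Ioo_subset_Icc_self hx)).hasDerivWithinAt.hasDerivAt (Icc_mem_nhds hx.1 hx.2)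
  have hne : ∀ x ∈ Icc a b, x ≠ 0 := fun x hx => (ha.trans_le hx.1).ne'
  have hloc : ∀ x ∈ Ioo a b, x ∉ range ρ → ∃ i < k, x ∈ Ioo (ρ i) (ρ (i + 1)) := by
    intro x hx hxs
    classical
    have hex : ∃ j, x < ρ j := ⟨k, hρk ▸ hx.2⟩
    have h1 := Nat.find_spec hex
    have h2 : Nat.find hex ≤ k := Nat.find_min' hex (hρk ▸ hx.2)
    have h3 : Nat.find hex ≠ 0 := by
      intro h
      rw [h, hρ0] at h1
      exact absurd h1 (not_lt.2 hx.1.le)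
    obtain ⟨i, hi⟩ := Nat.exists_eq_succ_of_ne_zero h3
    have h4 : ¬ x < ρ i := Nat.find_min hex (by omega)
    refine ⟨i, by omega, lt_of_le_of_ne (not_lt.1 h4) (fun h => hxs ⟨i, h⟩), ?_⟩
    rw [hi] at h1
    exact h1
  have hP := const_off_countable a b (fun x => G x + g x / x) (range ρ) (countable_range ρ)
    (hGc.add (hgc.div continuousOn_id hne)) (by
      intro x hx hxs
      obtain ⟨i, hi, hxi⟩ := hloc x hx hxs
      have hx0 := hne x (Ioo_subset_Icc_self hx)
      have hev : G =ᶠ[nhds x] deriv g := by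
        filter_upwards [Ioo_mem_nhds hx.1 hx.2] with y hy
        exact (hGd y hy).deriv.symm
      have hdd : DifferentiableAt ℝ (deriv g) x := by
        have h := ((hg2 i hi).contDiffAt (Ioo_mem_nhds hxi.1 hxi.2))
        have h' : ContDiffAt ℝ 1 (deriv g) x := h.derivWithin (by norm_num)
        exact h'.differentiableAt one_ne_zero
      have h1 : HasDerivAt G (deriv (deriv g) x) x := hdd.hasDerivAt.congr_of_eventuallyEq hev
      have h2 := h1.add ((hGd x hx).div (hasDerivAt_id x) hx0)
      have h3 := heq i hi x hxi
      rw [(hGd x hx).deriv] at h3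
      refine h2.congr_deriv ?_
      rw [← h3]
      simp only [id]
      field_simp
      ring)
  set c := G a + g a / a with hc
  have hQ := const_off_countable a b (fun x => x * g x - c * x ^ 2 / 2) ∅ countable_empty
    ((continuousOn_id.mul hgc).sub (by fun_prop)) (by
      intro x hx _
      have hx0 := hne x (Ioo_subset_Icc_self hx)
      have h3 : G x + g x / x = c := hP x (Ioo_subset_Icc_self hx)
      have h2 := ((hasDerivAt_id x).mul (hGd x hx)).sub
        ((((hasDerivAt_id x).pow 2).const_mul c).div_const 2)
      refine h2.congr_deriv ?_
      rw [← h3]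
      simp only [id]
      field_simp
      ring)
  have hb := hQ b ⟨hab.le, le_rfl⟩
  simp only [hga, hgb] at hb
  have hc0 : c = 0 := by
    have : c * ((b - a) * (b + a)) = 0 := by linarith
    rcases mul_eq_zero.1 this with h | h
    · exact h
    · exact absurd h (mul_pos (by linarith) (by linarith)).ne'
  intro r hr
  have h := hQ r hr
  simp only [hc0, hga] at h
  have : r * g r = 0 := by linarith
  exact (mul_eq_zero.1 this).resolve_left (hne r hr)
end
end
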